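/- Lacunary Littlewood–Paley inequality in weak Orlicz spaces on the circle (commutative case of the Fourier multiplier lemma in Section 5, Lemma 5.7's analogue): Let 𝕋 be the circle (the additive circle of circumference 1) with its normalized Haar probability measure m, and for n ∈ ℕ let I_n = {k ∈ ℤ : 3ⁿ/2 < k ≤ 3ⁿ}. Let Φ be an Orlicz function for which there exist 2 < p ≤ q < ∞ such that t ↦ t^{−p}Φ(t) is nondecreasing and t ↦ t^{−q}Φ(t) is nonincreasing on (0,∞) (this expresses 2 < a_Φ ≤ b_Φ < ∞). Then there exists a constant C > 0 depending only on Φ, p, q such that for every analytic trigonometric polynomial f(x) = Σ_{k=0}^K c_k·e^{2πikx} (c_k ∈ ℂ, K ∈ ℕ), setting Δ_n f(x) = Σ_{k ∈ I_n} c_k·e^{2πikx}: sup_{s>0} m{x : (Σ_{n} |Δ_n f(x)|²)^{1/2} > s}·Φ(s) ≤ C·sup_{s>0} m{x : |f(x)| > s}·Φ(s) (both sides in [0,∞]; the sum over n is finite since only finitely many Δ_n f are nonzero). -/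

import Mathlib

/-!
The weak-type inequality is obtained by real interpolation between `L²` and a high power
`L^{2^{a+2}}` with `2^a > q`. Fix a height `s` and split `f` into its truncation `u` at modulus `s`
and the rest `v`. If `b` bounds the weak moment of `f`, then `m{|f| > t} ≤ b / Φ(t)`, and the
monotonicity of `t^{-p} Φ(t)` and `t^{-q} Φ(t)` makes this at most `(b / Φ(s)) (s / t)^p` for
`t ≥ s` and at most `(b / Φ(s)) (s / t)^q` for `t ≤ s`. As `p > 2`, the layer cake formula bounds
`∫ |v|²` by a multiple of `s² b / Φ(s)` (`upper_moment`); as the high power exceeds `q`, it bounds the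
corresponding moment of `u` (`lower_moment`). Chebyshev's inequality for the square functions of
`u` and `v` then gives the claim at height `s` (`weak_at_height`, `weak_moment_le`).

The `L²` bound for the lacunary square function is Bessel's inequality (`sharp_square_two`). The bound
in `L^{2^{a+2}}` (`sharp_square`) has two ingredients.

* The sharp blocks are obtained from smooth blocks by vector-valued Riesz projections
  (`exists_bandBound`). These are bounded in `L^{2^{k+1}}(ℓ²)` by Cotlar's doubling argument, starting
  from orthogonality in `L²` (`RieszBound.succ`).

* For the smooth blocks `Δ_n`, let `T_j = ∑_{n < j} |Δ_n f|²`. Abel summation bounds `T_N^{s+1}` by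
  `(s + 1) ∑_j (T_{j+1}^s - T_j^s) (T_N - T_j)` (`abel_pow`). The first factor is a trigonometric
  polynomial of degree `O(3^j)`, hence is dominated by its averages against squared Dirichlet kernels
  at that scale (`norm_le_reproducing`). Against such a kernel, the tail `T_N - T_j` is controlled by
  `|f|²`, because a smooth multiplier at scale `3^k`, `k ≥ j`, commutes with multiplication by a
  polynomial of degree `O(3^j)` up to an error summable in `k` (`cf_mul_smoothBlock`, `local_square`).
  This leads to `∫ T_N^{s+1} ≤ C ∫ T_N^s M(|f|²)` with a maximal function `M` over averages against
  kernels at the scales `3^j` (`square_le_maxFn`), and `M` is bounded in `L^{2^{a+1}}` by duality and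
  the fact that a composition of two kernels is dominated by the coarser one (`maximal_sq`,
  `maximal_pow`).
-/

open Set Filter MeasureTheory
open scoped ENNReal

/-- An Orlicz function: continuous, convex, nondecreasing on `[0,∞)`, vanishing at `0`,
positive on `(0,∞)`, and tending to `∞` at `∞`. -/
def IsOrliczFunction (Φ : ℝ → ℝ) : Prop :=
  ContinuousOn Φ (Ici 0) ∧ ConvexOn ℝ (Ici 0) Φ ∧ MonotoneOn Φ (Ici 0) ∧
    Φ 0 = 0 ∧ (∀ t > 0, 0 < Φ t) ∧ Tendsto Φ atTop atTop

/-- The distribution function `λ_f(s) = μ {x : |f(x)| > s}`, a value in `[0,∞]`. -/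
noncomputable def distrib {X : Type*} [MeasurableSpace X] (μ : Measure X) (f : X → ℂ)
    (s : ℝ) : ℝ≥0∞ :=
  μ {x | s < ‖f x‖}

/-- The weak Orlicz quasinorm `‖f‖_{L^w_Φ} = inf {c > 0 : λ_f(s) Φ(s/c) ≤ 1 for all s > 0}`,
as an element of `[0,∞]` (the infimum of the empty set being `∞`). -/
noncomputable def wOrliczNorm {X : Type*} [MeasurableSpace X] (μ : Measure X) (Φ : ℝ → ℝ)
    (f : X → ℂ) : ℝ≥0∞ :=
  sInf (ENNReal.ofReal ''
    {c : ℝ | 0 < c ∧ ∀ s > 0, distrib μ f s * ENNReal.ofReal (Φ (s / c)) ≤ 1})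

instance : Fact ((0 : ℝ) < 1) := ⟨one_pos⟩

/-- The lacunary block projection `Δ_n f` of the analytic trigonometric polynomial with
coefficients `c 0, …, c K`: it keeps the frequencies `k` with `3ⁿ/2 < k ≤ 3ⁿ`. -/
noncomputable def lacunaryBlock (K : ℕ) (c : ℕ → ℂ) (n : ℕ) (x : AddCircle (1 : ℝ)) : ℂ :=
  ∑ k ∈ (Finset.range (K + 1)).filter (fun k => 3 ^ n < 2 * k ∧ k ≤ 3 ^ n),
    c k * fourier (k : ℤ) x

section LittlewoodPaley

open AddCircle ComplexConjugate

/-! ### Trigonometric polynomials and the vector-valued Riesz projection -/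

/-- The circle of circumference `1`. -/
abbrev Circ := AddCircle (1 : ℝ)

/-- The normalized Haar probability measure on the circle. -/
noncomputable abbrev mu : Measure Circ := haarAddCircle

/-- Continuous complex functions on the circle; trigonometric polynomials are handled as elements of
this algebra. -/
abbrev Tor := C(Circ, ℂ)

lemma cint {E : Type*} [NormedAddCommGroup E] {g : Circ → E} (hg : Continuous g) :
    Integrable g mu :=
  hg.integrable_of_hasCompactSupport (HasCompactSupport.of_compactSpace g)

/-- Trigonometric polynomials with frequencies in `s`. -/
noncomputable def Sp (s : Set ℤ) : Submodule ℂ Tor := Submodule.span ℂ ((fun k : ℤ => (fourier k : Tor)) '' s)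

lemma fourier_mem_Sp {s : Set ℤ} {k : ℤ} (h : k ∈ s) : (fourier k : Tor) ∈ Sp s :=
  Submodule.subset_span ⟨k, h, rfl⟩

lemma Sp_mono {s t : Set ℤ} (h : s ⊆ t) {f : Tor} (hf : f ∈ Sp s) : f ∈ Sp t :=
  Submodule.span_mono (image_mono h) hf

lemma fourier_mul_eq (m n : ℤ) : (fourier m : Tor) * fourier n = fourier (m + n) := by
  ext x; simp

lemma star_fourier_eq (m : ℤ) : star (fourier m : Tor) = fourier (-m) := by
  ext x; simp

lemma Sp_mul {s t r : Set ℤ} (h : ∀ a ∈ s, ∀ b ∈ t, a + b ∈ r) {f g : Tor}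
    (hf : f ∈ Sp s) (hg : g ∈ Sp t) : f * g ∈ Sp r := by
  induction hf using Submodule.span_induction with
  | mem x hx =>
    obtain ⟨a, ha, rfl⟩ := hx
    induction hg using Submodule.span_induction with
    | mem y hy =>
      obtain ⟨b, hb, rfl⟩ := hy
      simp only [fourier_mul_eq]
      exact fourier_mem_Sp (h a ha b hb)
    | zero => simp
    | add x y _ _ h1 h2 => rw [mul_add]; exact add_mem h1 h2
    | smul c x _ h1 => rw [mul_smul_comm]; exact Submodule.smul_mem _ _ h1
  | zero => simp
  | add x y _ _ h1 h2 => rw [add_mul]; exact add_mem h1 h2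
  | smul c x _ h1 => rw [smul_mul_assoc]; exact Submodule.smul_mem _ _ h1

lemma Sp_star {s t : Set ℤ} (h : ∀ a ∈ s, -a ∈ t) {f : Tor} (hf : f ∈ Sp s) : star f ∈ Sp t := by
  induction hf using Submodule.span_induction with
  | mem x hx =>
    obtain ⟨a, ha, rfl⟩ := hx
    simp only [star_fourier_eq]
    exact fourier_mem_Sp (h a ha)
  | zero => simp
  | add x y _ _ h1 h2 => rw [star_add]; exact add_mem h1 h2
  | smul c x _ h1 => rw [star_smul]; exact Submodule.smul_mem _ _ h1

lemma integral_fourier_eq (k : ℤ) : ∫ x, (fourier k x : ℂ) ∂mu = if k = 0 then 1 else 0 := by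
  have := fourierCoeff_fourier (T := 1) k
  have h2 := congrFun this 0
  simp only [fourierCoeff, neg_zero, fourier_zero, one_smul] at h2
  rw [h2, Pi.single_apply]
  simp [eq_comm]

lemma integral_Sp_zero {s : Set ℤ} (h : (0 : ℤ) ∉ s) {f : Tor} (hf : f ∈ Sp s) :
    ∫ x, f x ∂mu = 0 := by
  induction hf using Submodule.span_induction with
  | mem x hx =>
    obtain ⟨a, ha, rfl⟩ := hx
    rw [integral_fourier_eq, if_neg]
    rintro rfl; exact h ha
  | zero => simp
  | add x y _ _ h1 h2 =>
    simp only [ContinuousMap.add_apply]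
    rw [integral_add (cint x.continuous) (cint y.continuous), h1, h2, add_zero]
  | smul c x _ h1 => simp [integral_const_mul, h1]

lemma norm_fourier_apply (m : ℤ) (x : Circ) : ‖(fourier m x : ℂ)‖ = 1 := by
  rw [fourier_apply]; exact Circle.norm_coe _

/-- The real part of a trigonometric polynomial `c f` is the sum of a part `v` with frequencies `≤ 0`
and a part `w` with frequencies `> 0`, and it equals `2 Re v` up to its mean. The scalar `c` makes
the statement stable under the induction on the linear span. -/
lemma real_part_decomp_aux {f : Tor} (hf : f ∈ Sp univ) (c : ℂ) :
    ∃ v ∈ Sp (Iic 0), ∃ w ∈ Sp (Ioi 0), ∀ x,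
      (((c * f x).re : ℝ) : ℂ) = v x + w x ∧
        (c * f x).re = 2 * (v x).re - (∫ y, c * f y ∂mu).re := by
  induction hf using Submodule.span_induction generalizing c with
  | mem x hx =>
    obtain ⟨k, -, rfl⟩ := hx
    have hre : ∀ x : Circ, (((c * fourier k x).re : ℝ) : ℂ)
        = c / 2 * fourier k x + conj c / 2 * fourier (-k) x := by
      intro x
      rw [Complex.re_eq_add_conj, map_mul, fourier_neg]; ring
    have hre2 : ∀ x : Circ, (conj c / 2 * fourier (-k) x).re = (c / 2 * fourier k x).re := by
      intro x
      rw [fourier_neg, ← Complex.conj_re, map_mul, map_div₀, Complex.conj_conj, Complex.conj_conj,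
        map_ofNat]
    have hre3 : ∀ x : Circ, (c / 2 * fourier k x).re = (c * fourier k x).re / 2 := by
      intro x
      rw [div_mul_eq_mul_div]; simp
    simp only [integral_const_mul, integral_fourier_eq]
    rcases lt_trichotomy k 0 with hk | rfl | hk
    · refine ⟨(c / 2) • fourier k, Submodule.smul_mem _ _ (fourier_mem_Sp hk.le),
        (conj c / 2) • fourier (-k), Submodule.smul_mem _ _ (fourier_mem_Sp (by simpa using hk)), fun x => ⟨?_, ?_⟩⟩
      · simpa using hre x
      · rw [if_neg hk.ne]
        simp only [ContinuousMap.smul_apply, smul_eq_mul, hre3]; simp; ring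
    · refine ⟨(c.re : ℂ) • fourier 0, Submodule.smul_mem _ _ (fourier_mem_Sp (by simp)),
        0, zero_mem _, fun x => ⟨?_, ?_⟩⟩
      · simp
      · simp; ring
    · refine ⟨(conj c / 2) • fourier (-k), Submodule.smul_mem _ _ (fourier_mem_Sp (by simpa using hk.le)),
        (c / 2) • fourier k, Submodule.smul_mem _ _ (fourier_mem_Sp hk), fun x => ⟨?_, ?_⟩⟩
      · rw [hre]; simp [add_comm]
      · rw [if_neg hk.ne']
        simp only [ContinuousMap.smul_apply, smul_eq_mul, hre2, hre3]; simp; ring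
  | zero => exact ⟨0, zero_mem _, 0, zero_mem _, by simp⟩
  | add f g _ _ h1 h2 =>
    obtain ⟨v, hv, w, hw, h⟩ := h1 c
    obtain ⟨v', hv', w', hw', h'⟩ := h2 c
    refine ⟨v + v', add_mem hv hv', w + w', add_mem hw hw', fun x => ⟨?_, ?_⟩⟩
    · have h3 := (h x).1; have h4 := (h' x).1
      simp only [ContinuousMap.add_apply, mul_add, Complex.add_re, Complex.ofReal_add]
      rw [h3, h4]; ring
    · have h3 := (h x).2; have h4 := (h' x).2
      simp only [ContinuousMap.add_apply, mul_add, Complex.add_re]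
      rw [integral_add (cint (by fun_prop)) (cint (by fun_prop)), Complex.add_re]
      linarith
  | smul a f _ h1 =>
    obtain ⟨v, hv, w, hw, h⟩ := h1 (c * a)
    refine ⟨v, hv, w, hw, fun x => ?_⟩
    simpa only [ContinuousMap.smul_apply, smul_eq_mul, mul_assoc] using h x

lemma real_part_decomp {f : Tor} (hf : f ∈ Sp univ) :
    ∃ v ∈ Sp (Iic 0), ∃ w ∈ Sp (Ioi 0), ∀ x,
      (((f x).re : ℝ) : ℂ) = v x + w x ∧ (f x).re = 2 * (v x).re - (∫ y, f y ∂mu).re := by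
  simpa using real_part_decomp_aux hf 1

/-- Trigonometric polynomials with positive and with nonpositive frequencies are orthogonal. -/
lemma sq_add_orth {a b : Tor} (ha : a ∈ Sp (Ioi 0)) (hb : b ∈ Sp (Iic 0)) :
    ∫ x, ‖a x + b x‖ ^ 2 ∂mu = ∫ x, ‖a x‖ ^ 2 ∂mu + ∫ x, ‖b x‖ ^ 2 ∂mu := by
  have h0 : ∫ x, a x * conj (b x) ∂mu = 0 := by
    have : a * star b ∈ Sp (Ioi 0) :=
      Sp_mul (t := Ici 0) (fun m hm n hn => by simp only [mem_Ioi, mem_Ici] at *; omega) ha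
        (Sp_star (fun m hm => by simpa using hm) hb)
    simpa using integral_Sp_zero (by simp) this
  have h1 : ∀ x, ‖a x + b x‖ ^ 2 = ‖a x‖ ^ 2 + ‖b x‖ ^ 2 + 2 * (a x * conj (b x)).re := by
    intro x
    rw [← Complex.normSq_eq_norm_sq, ← Complex.normSq_eq_norm_sq, ← Complex.normSq_eq_norm_sq,
      Complex.normSq_add]
  have h2 : ∫ x, (a x * conj (b x)).re ∂mu = 0 := by
    have := integral_re (𝕜 := ℂ) (μ := mu) (f := fun x => a x * conj (b x)) (cint (by fun_prop))
    simp only [RCLike.re_to_complex] at this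
    rw [this, h0]; rfl
  simp only [h1]
  rw [integral_add (cint (by fun_prop)) (cint (by fun_prop)),
    integral_add (cint (by fun_prop)) (cint (by fun_prop)), integral_const_mul, h2]
  ring

/-- The vector-valued Riesz projection bound in `L^{2^{k+1}}(ℓ²)` with constant `C`: dropping the
parts `b n` with nonpositive frequencies from the functions `a n + b n` increases the integral of
`(∑ |·|²)^{2^k}` by at most the factor `C`. -/
def RieszBound (k : ℕ) (C : ℝ) : Prop :=
  ∀ (N : ℕ) (a b : ℕ → Tor), (∀ n, a n ∈ Sp (Ioi 0)) → (∀ n, b n ∈ Sp (Iic 0)) →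
    ∫ x, (∑ n ∈ Finset.range N, ‖a n x‖ ^ 2) ^ (2 ^ k) ∂mu ≤
      C * ∫ x, (∑ n ∈ Finset.range N, ‖a n x + b n x‖ ^ 2) ^ (2 ^ k) ∂mu

lemma rieszBound_zero : RieszBound 0 1 := by
  intro N a b ha hb
  simp only [pow_zero, pow_one, one_mul]
  rw [integral_finsetSum _ (fun n _ => cint (by fun_prop)),
    integral_finsetSum _ (fun n _ => cint (by fun_prop))]
  refine Finset.sum_le_sum fun n _ => ?_
  rw [sq_add_orth (ha n) (hb n)]
  have : 0 ≤ ∫ x, ‖b n x‖ ^ 2 ∂mu := integral_nonneg fun x => by positivity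
  linarith

/-- The case of a single function, for the complementary projection onto the frequencies `≤ 0`. -/
lemma RieszBound.scalar {k : ℕ} {C : ℝ} (h : RieszBound k C) {a b : Tor} (ha : a ∈ Sp (Ioi 0))
    (hb : b ∈ Sp (Iic 0)) :
    ∫ x, ‖b x‖ ^ (2 ^ (k + 1)) ∂mu ≤
      2 ^ (2 ^ (k + 1)) * (C + 1) * ∫ x, ‖a x + b x‖ ^ (2 ^ (k + 1)) ∂mu := by
  have h1 := h 1 (fun _ => a) (fun _ => b) (fun _ => ha) (fun _ => hb)
  simp only [Finset.range_one, Finset.sum_singleton, ← pow_mul, ← pow_succ'] at h1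
  have h2 : ∀ x, ‖b x‖ ^ (2 ^ (k + 1)) ≤ 2 ^ (2 ^ (k + 1)) *
      (‖a x‖ ^ (2 ^ (k + 1)) + ‖a x + b x‖ ^ (2 ^ (k + 1))) := by
    intro x
    have h3 : ‖b x‖ ≤ ‖a x‖ + ‖a x + b x‖ := by
      calc ‖b x‖ = ‖(a x + b x) - a x‖ := by congr 1; ring
        _ ≤ _ := by rw [add_comm ‖a x‖]; exact norm_sub_le _ _
    calc _ ≤ (‖a x‖ + ‖a x + b x‖) ^ (2 ^ (k + 1)) := pow_le_pow_left₀ (norm_nonneg _) h3 _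
      _ ≤ _ := add_pow_le (norm_nonneg (a x)) (norm_nonneg (a x + b x)) _
      _ ≤ _ := by gcongr <;> simp
  calc _ ≤ ∫ x, 2 ^ (2 ^ (k + 1)) * (‖a x‖ ^ (2 ^ (k + 1)) + ‖a x + b x‖ ^ (2 ^ (k + 1))) ∂mu :=
        integral_mono (cint (by fun_prop)) (cint (by fun_prop)) h2
    _ = 2 ^ (2 ^ (k + 1)) * (∫ x, ‖a x‖ ^ (2 ^ (k + 1)) ∂mu + ∫ x, ‖a x + b x‖ ^ (2 ^ (k + 1)) ∂mu) := by
        rw [integral_const_mul, integral_add (cint (by fun_prop)) (cint (by fun_prop))]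
    _ ≤ _ := by
        rw [mul_assoc]; gcongr; linarith

/-- Jensen's inequality on the circle. -/
lemma integral_pow_le_pow {g : Circ → ℝ} (hg : Continuous g) (h0 : ∀ x, 0 ≤ g x) (n : ℕ) :
    (∫ x, g x ∂mu) ^ n ≤ ∫ x, g x ^ n ∂mu :=
  (convexOn_pow n).map_integral_le (by fun_prop) isClosed_Ici (ae_of_all _ h0)
    (cint hg) (cint (show Continuous fun x => g x ^ n by fun_prop))

/-- Cotlar's doubling argument. Put `U = ∑ |a n|²` and `w = ∑ a n * conj (a n + b n)`. The difference
`w - U = ∑ a n * conj (b n)` has positive frequencies only, so `U` and `w` share the part `v` with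
frequencies `≤ 0`. The scalar bound controls `v` by `w`, Cauchy–Schwarz gives
`|w|² ≤ U * ∑ |a n + b n|²`, and `U = 2 Re v - ∫ U`; the occurrence of `U` on the right is absorbed. -/
lemma RieszBound.succ {k : ℕ} {C : ℝ} (hC : 0 ≤ C) (h : RieszBound k C) :
    ∃ C', 0 ≤ C' ∧ RieszBound (k + 1) C' := by
  set p := 2 ^ (k + 1) with hp
  set c : ℝ := 2 ^ p * (C + 1) with hc
  have hcpos : 0 < c := by positivity
  set ε : ℝ := (2 * (4 ^ p * c))⁻¹ with hε
  have hεpos : 0 < ε := by positivity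
  refine ⟨2 * (4 ^ p * c * ε⁻¹ + 2 ^ p), by positivity, ?_⟩
  intro N a b ha hb
  set u : Tor := ∑ n ∈ Finset.range N, a n * star (a n) with hu
  set w : Tor := ∑ n ∈ Finset.range N, a n * star (a n + b n) with hw
  set U : Circ → ℝ := fun x => ∑ n ∈ Finset.range N, ‖a n x‖ ^ 2 with hU
  set G : Circ → ℝ := fun x => ∑ n ∈ Finset.range N, ‖a n x + b n x‖ ^ 2 with hG
  have hUc : Continuous U := by fun_prop
  have hGc : Continuous G := by fun_prop
  have hU0 : ∀ x, 0 ≤ U x := fun x => Finset.sum_nonneg fun n _ => by positivity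
  have hG0 : ∀ x, 0 ≤ G x := fun x => Finset.sum_nonneg fun n _ => by positivity
  have hux : ∀ x, u x = (U x : ℂ) := by
    intro x
    simp [hu, hU, Complex.mul_conj, Complex.normSq_eq_norm_sq]
  have huS : u ∈ Sp univ := sum_mem fun n _ =>
    Sp_mul (s := univ) (t := univ) (by simp) (Sp_mono (subset_univ _) (ha n))
      (Sp_star (by simp) (ha n))
  obtain ⟨v, hv, w', hw', hvw⟩ := real_part_decomp huS
  have hwu : w - u ∈ Sp (Ioi 0) := by
    have : w - u = ∑ n ∈ Finset.range N, a n * star (b n) := by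
      rw [hw, hu, ← Finset.sum_sub_distrib]
      refine Finset.sum_congr rfl fun n _ => ?_
      rw [star_add]; ring
    rw [this]
    exact sum_mem fun n _ => Sp_mul (t := Ici 0)
      (fun m hm n hn => by simp only [mem_Ioi, mem_Ici] at *; omega) (ha n)
        (Sp_star (fun m hm => by simpa using hm) (hb n))
  have hscal := h.scalar (add_mem hwu hw') hv
  rw [← hp, ← hc] at hscal
  have hsum : ∀ x, (w - u + w') x + v x = w x := by
    intro x
    have := (hvw x).1
    rw [hux] at this
    simp only [ContinuousMap.add_apply, ContinuousMap.sub_apply, hux]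
    simp only [Complex.ofReal_re] at this
    linear_combination -this
  simp only [hsum] at hscal
  -- Cauchy–Schwarz followed by a weighted Young inequality; `ε` is small enough for the `U` term to
  -- be absorbed at the end
  have hwb : ∀ x, ‖w x‖ ^ p ≤ ε * U x ^ p + ε⁻¹ * G x ^ p := by
    intro x
    have h1 : ‖w x‖ ^ 2 ≤ U x * G x := by
      have h2 : ‖w x‖ ≤ ∑ n ∈ Finset.range N, ‖a n x‖ * ‖a n x + b n x‖ := by
        have : w x = ∑ n ∈ Finset.range N, a n x * conj (a n x + b n x) := by simp [hw]
        rw [this]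
        refine (norm_sum_le _ _).trans (Finset.sum_le_sum fun n _ => ?_)
        rw [norm_mul, RCLike.norm_conj]
      calc ‖w x‖ ^ 2 ≤ (∑ n ∈ Finset.range N, ‖a n x‖ * ‖a n x + b n x‖) ^ 2 := by gcongr
        _ ≤ _ := Finset.sum_mul_sq_le_sq_mul_sq _ _ _
    have h3 : ‖w x‖ ^ p ≤ U x ^ (2 ^ k) * G x ^ (2 ^ k) := by
      rw [hp, pow_succ', pow_mul, ← mul_pow]; gcongr
    have h4 : U x ^ p = (U x ^ (2 ^ k)) ^ 2 := by rw [hp, pow_succ, pow_mul]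
    have h5 : G x ^ p = (G x ^ (2 ^ k)) ^ 2 := by rw [hp, pow_succ, pow_mul]
    have hA : 0 ≤ U x ^ (2 ^ k) := pow_nonneg (hU0 x) _
    have hB : 0 ≤ G x ^ (2 ^ k) := pow_nonneg (hG0 x) _
    rw [h4, h5]
    refine h3.trans ?_
    generalize U x ^ (2 ^ k) = A at *
    generalize G x ^ (2 ^ k) = B at *
    have h6 : 0 ≤ ε⁻¹ * (ε * A - B) ^ 2 := by positivity
    have h7 : ε⁻¹ * (ε * A - B) ^ 2 = ε * A ^ 2 + ε⁻¹ * B ^ 2 - 2 * (A * B) := by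
      field_simp
      ring
    nlinarith [mul_nonneg hA hB]
  set m : ℝ := (∫ y, u y ∂mu).re with hm
  have hmU : m = ∫ x, U x ∂mu := by
    rw [hm]; simp only [hux]
    rw [integral_complex_ofReal, Complex.ofReal_re]
  have hm0 : 0 ≤ m := by rw [hmU]; exact integral_nonneg hU0
  have hmG : m ^ p ≤ ∫ x, G x ^ p ∂mu := by
    refine le_trans ?_ (integral_pow_le_pow hGc hG0 p)
    gcongr
    rw [hmU]
    simpa [hU, hG] using rieszBound_zero N a b ha hb
  have hUb : ∀ x, U x ^ p ≤ 4 ^ p * ‖v x‖ ^ p + 2 ^ p * m ^ p := by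
    intro x
    have h1 := (hvw x).2
    rw [hux, Complex.ofReal_re] at h1
    have h2 : U x ≤ 2 * ‖v x‖ + m := by
      have := Complex.re_le_norm (v x); linarith
    calc U x ^ p ≤ (2 * ‖v x‖ + m) ^ p := pow_le_pow_left₀ (hU0 x) h2 _
      _ ≤ 2 ^ (p - 1) * ((2 * ‖v x‖) ^ p + m ^ p) := add_pow_le (by positivity) hm0 _
      _ ≤ 2 ^ p * ((2 * ‖v x‖) ^ p + m ^ p) := by gcongr <;> simp
      _ = _ := by
        rw [mul_pow, mul_add, ← mul_assoc, ← mul_pow]; norm_num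
  have e1 : ∫ x, U x ^ p ∂mu ≤ 4 ^ p * ∫ x, ‖v x‖ ^ p ∂mu + 2 ^ p * m ^ p := by
    calc _ ≤ ∫ x, (4 ^ p * ‖v x‖ ^ p + 2 ^ p * m ^ p) ∂mu :=
          integral_mono (cint (by fun_prop)) (cint (by fun_prop)) hUb
      _ = _ := by
        rw [integral_add (cint (by fun_prop)) (cint (by fun_prop)), integral_const_mul]; simp
  have e2 : ∫ x, ‖w x‖ ^ p ∂mu ≤ ε * ∫ x, U x ^ p ∂mu + ε⁻¹ * ∫ x, G x ^ p ∂mu := by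
    calc _ ≤ ∫ x, (ε * U x ^ p + ε⁻¹ * G x ^ p) ∂mu :=
          integral_mono (cint (by fun_prop)) (cint (by fun_prop)) hwb
      _ = _ := by
        rw [integral_add (cint (by fun_prop)) (cint (by fun_prop)), integral_const_mul, integral_const_mul]
  have e3 : 4 ^ p * c * ε = 1 / 2 := by rw [hε]; field_simp
  change ∫ x, U x ^ p ∂mu ≤ _ * ∫ x, G x ^ p ∂mu
  have e4 : 4 ^ p * ∫ x, ‖v x‖ ^ p ∂mu ≤
      4 ^ p * (c * (ε * ∫ x, U x ^ p ∂mu + ε⁻¹ * ∫ x, G x ^ p ∂mu)) := by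
    gcongr
    exact hscal.trans (by gcongr)
  have e5 : (2 : ℝ) ^ p * m ^ p ≤ 2 ^ p * ∫ x, G x ^ p ∂mu := by gcongr
  have e6 : 4 ^ p * (c * (ε * ∫ x, U x ^ p ∂mu + ε⁻¹ * ∫ x, G x ^ p ∂mu)) =
      1 / 2 * ∫ x, U x ^ p ∂mu + 4 ^ p * c * ε⁻¹ * ∫ x, G x ^ p ∂mu := by
    rw [← e3]; ring
  linarith

lemma exists_rieszBound (k : ℕ) : ∃ C, 0 ≤ C ∧ RieszBound k C := by
  induction k with
  | zero => exact ⟨1, zero_le_one, rieszBound_zero⟩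
  | succ k ih =>
    obtain ⟨C, hC, h⟩ := ih
    exact h.succ hC

/-- Sharp projections onto the bands `(α n, β n]`, in vector-valued form: `d n` is the part of
`l n + d n + h n` in the band, `l n` lies below and `h n` above. Two Riesz projections are used, one
after modulation by `e(-α n)`, the other after complex conjugation and modulation by `e(β n + 1)`. -/
lemma exists_bandBound (k : ℕ) : ∃ C, 0 ≤ C ∧ ∀ (N : ℕ) (α β : ℕ → ℤ) (l d h : ℕ → Tor),
    (∀ n, l n ∈ Sp (Iic (α n))) → (∀ n, d n ∈ Sp (Ioc (α n) (β n))) →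
    (∀ n, h n ∈ Sp (Ioi (α n) ∩ Ioi (β n))) →
    ∫ x, (∑ n ∈ Finset.range N, ‖d n x‖ ^ 2) ^ (2 ^ k) ∂mu ≤
      C * ∫ x, (∑ n ∈ Finset.range N, ‖l n x + d n x + h n x‖ ^ 2) ^ (2 ^ k) ∂mu := by
  obtain ⟨C, hC, hR⟩ := exists_rieszBound k
  refine ⟨C * C, by positivity, fun N α β l d h hl hd hh => ?_⟩
  have hnorm : ∀ (m : ℤ) (x : Circ), ‖(fourier m x : ℂ)‖ = 1 := norm_fourier_apply
  have h1 := hR N (fun n => fourier (-α n) * (d n + h n)) (fun n => fourier (-α n) * l n)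
    (fun n => Sp_mul (s := {-α n}) (t := Ioi (α n)) (by simp)
      (fourier_mem_Sp rfl) (add_mem (Sp_mono (fun x hx => hx.1) (hd n))
        (Sp_mono inter_subset_left (hh n))))
    (fun n => Sp_mul (s := {-α n}) (t := Iic (α n)) (by simp)
      (fourier_mem_Sp rfl) (hl n))
  have h2 := hR N (fun n => fourier (β n + 1) * star (d n)) (fun n => fourier (β n + 1) * star (h n))
    (fun n => Sp_mul (s := {β n + 1}) (t := Ici (-β n))
      (fun a ha b hb => by simp only [mem_singleton_iff, mem_Ici, mem_Ioi] at *; omega)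
      (fourier_mem_Sp rfl) (Sp_star (fun m hm => by simp only [mem_Ioc, mem_Ici] at *; omega) (hd n)))
    (fun n => Sp_mul (s := {β n + 1}) (t := Iic (-β n - 1))
      (fun a ha b hb => by simp only [mem_singleton_iff, mem_Iic] at *; omega)
      (fourier_mem_Sp rfl) (Sp_star (fun m hm => by
        simp only [mem_inter_iff, mem_Ioi, mem_Iic] at *; omega) (hh n)))
  have e1 : ∀ n x, ‖((fourier (-α n) : Tor) * (d n + h n)) x‖ = ‖d n x + h n x‖ := fun n x => by
    simp only [ContinuousMap.mul_apply, norm_mul, hnorm, one_mul, ContinuousMap.add_apply]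
  have e2 : ∀ n x, ‖((fourier (-α n) : Tor) * (d n + h n)) x + ((fourier (-α n) : Tor) * l n) x‖
      = ‖l n x + d n x + h n x‖ := fun n x => by
    simp only [ContinuousMap.mul_apply, ContinuousMap.add_apply]
    rw [← mul_add, norm_mul, hnorm, one_mul]
    congr 1; ring
  have e3 : ∀ n x, ‖((fourier (β n + 1) : Tor) * star (d n)) x‖ = ‖d n x‖ := fun n x => by
    simp only [ContinuousMap.mul_apply, norm_mul, hnorm, one_mul, ContinuousMap.star_apply, norm_star]
  have e4 : ∀ n x, ‖((fourier (β n + 1) : Tor) * star (d n)) x + ((fourier (β n + 1) : Tor) * star (h n)) x‖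
      = ‖d n x + h n x‖ := fun n x => by
    simp only [ContinuousMap.mul_apply, ContinuousMap.star_apply]
    rw [← mul_add, norm_mul, hnorm, one_mul, ← star_add, norm_star]
  simp only [e1, e2] at h1
  simp only [e3, e4] at h2
  refine h2.trans ?_
  rw [mul_assoc]
  gcongr

/-! ### An abstract maximal inequality -/

/-- Absorption: `B ≤ c √A √B` with `B` finite gives `B ≤ c² A`. -/
lemma sq_le_of_le_sqrt_mul {A B c : ℝ≥0∞} (hB : B ≠ ∞)
    (h : B ≤ c * (A ^ (1 / 2 : ℝ) * B ^ (1 / 2 : ℝ))) : B ≤ c ^ 2 * A := by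
  have sq : ∀ x : ℝ≥0∞, (x ^ (1 / 2 : ℝ)) ^ 2 = x := fun x => by
    rw [← ENNReal.rpow_natCast, ← ENNReal.rpow_mul]; norm_num
  rcases eq_or_ne B 0 with h0 | h0
  · simp [h0]
  · have h1 : B ^ (1 / 2 : ℝ) ≠ 0 := by simp [h0]
    have h2 : B ^ (1 / 2 : ℝ) ≠ ∞ := by simp [hB]
    have h3 : B ^ (1 / 2 : ℝ) ≤ c * A ^ (1 / 2 : ℝ) := by
      rw [← ENNReal.mul_le_mul_iff_left h1 h2]
      calc _ = B := by rw [← pow_two, sq]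
        _ ≤ _ := h
        _ = _ := by ring
    calc B = (B ^ (1 / 2 : ℝ)) ^ 2 := (sq B).symm
      _ ≤ (c * A ^ (1 / 2 : ℝ)) ^ 2 := by gcongr
      _ = _ := by rw [mul_pow, sq]

/-- The Cauchy–Schwarz inequality for the lower Lebesgue integral. -/
lemma lintegral_mul_le_sqrt {X : Type*} [MeasurableSpace X] {ν : Measure X} {f g : X → ℝ≥0∞}
    (hf : Measurable f) (hg : Measurable g) :
    ∫⁻ x, f x * g x ∂ν ≤ (∫⁻ x, f x ^ 2 ∂ν) ^ (1 / 2 : ℝ) * (∫⁻ x, g x ^ 2 ∂ν) ^ (1 / 2 : ℝ) := by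
  have := ENNReal.lintegral_mul_le_Lp_mul_Lq ν (Real.HolderConjugate.two_two) hf.aemeasurable
    hg.aemeasurable
  simpa only [Pi.mul_apply, ENNReal.rpow_two] using this

section Maximal

variable {X : Type*} [MeasurableSpace X]

/-- The integral operator with kernel `k`. -/
noncomputable def kop (ν : Measure X) (k : X → X → ℝ≥0∞) (h : X → ℝ≥0∞) (x : X) : ℝ≥0∞ :=
  ∫⁻ y, k x y * h y ∂ν

/-- A sequence of symmetric nonnegative kernels of mass at most `C`, ordered from coarse to fine scales:
composing `k i` with a finer kernel `k j` gives at most `C` times the coarser kernel `k i`. -/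
structure KernelFamily (ν : Measure X) (k : ℕ → X → X → ℝ≥0∞) (C : ℝ≥0∞) : Prop where
  meas : ∀ j, Measurable (fun p : X × X => k j p.1 p.2)
  symm : ∀ j x y, k j x y = k j y x
  comp : ∀ i j, i ≤ j → ∀ x y, ∫⁻ z, k i x z * k j z y ∂ν ≤ C * k i x y
  mass : ∀ j x, ∫⁻ y, k j x y ∂ν ≤ C

/-- The maximal function over the first `N` kernels. -/
noncomputable def maxFn (ν : Measure X) (k : ℕ → X → X → ℝ≥0∞) (N : ℕ) (h : X → ℝ≥0∞) (x : X) :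
    ℝ≥0∞ :=
  (Finset.range N).sup fun j => kop ν (k j) h x

variable {ν : Measure X} {k : ℕ → X → X → ℝ≥0∞} {C : ℝ≥0∞}

lemma KernelFamily.meas_kop [SFinite ν] (H : KernelFamily ν k C) (j : ℕ) {h : X → ℝ≥0∞}
    (hh : Measurable h) : Measurable (kop ν (k j) h) :=
  ((H.meas j).mul (hh.comp measurable_snd)).lintegral_prod_right'

lemma KernelFamily.meas_maxFn [SFinite ν] (H : KernelFamily ν k C) (N : ℕ) {h : X → ℝ≥0∞}
    (hh : Measurable h) : Measurable (maxFn ν k N h) := by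
  have : maxFn ν k N h = (Finset.range N).sup fun j => kop ν (k j) h := by
    ext x; simp [maxFn, Finset.sup_apply]
  rw [this]
  exact Finset.sup_induction (p := Measurable) measurable_const (fun _ h₁ _ h₂ => h₁.sup h₂)
    fun j _ => H.meas_kop j hh

lemma KernelFamily.meas_fst (H : KernelFamily ν k C) (j : ℕ) (y : X) :
    Measurable fun x => k j x y :=
  (H.meas j).comp (measurable_id.prodMk measurable_const)

lemma KernelFamily.meas_snd (H : KernelFamily ν k C) (j : ℕ) (x : X) :
    Measurable fun y => k j x y :=
  (H.meas j).comp (measurable_const.prodMk measurable_id)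

lemma KernelFamily.kop_adjoint [SFinite ν] (H : KernelFamily ν k C) (j : ℕ) {g h : X → ℝ≥0∞}
    (hg : Measurable g) (hh : Measurable h) :
    ∫⁻ x, g x * kop ν (k j) h x ∂ν = ∫⁻ x, h x * kop ν (k j) g x ∂ν := by
  have e1 : ∀ g h : X → ℝ≥0∞, Measurable h →
      ∀ x, g x * kop ν (k j) h x = ∫⁻ y, g x * (k j x y * h y) ∂ν := fun g h hh x =>
    (lintegral_const_mul _ ((H.meas_snd j x).mul hh)).symm
  simp only [e1 g h hh, e1 h g hg]
  rw [lintegral_lintegral_swap]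
  · refine lintegral_congr fun x => lintegral_congr fun y => ?_
    rw [H.symm j y x]; ring
  · exact ((hg.comp measurable_fst).mul ((H.meas j).mul (hh.comp measurable_snd))).aemeasurable

/-- The pairing of `T_i g` with `T_j h`, for `T_j` finer than `T_i`, is controlled by `T_i` alone. -/
lemma KernelFamily.kop_mul_kop [SFinite ν] (H : KernelFamily ν k C) {i j : ℕ} (hij : i ≤ j)
    {g h : X → ℝ≥0∞} (hg : Measurable g) (hh : Measurable h) :
    ∫⁻ x, kop ν (k i) g x * kop ν (k j) h x ∂ν ≤ C * ∫⁻ x, h x * kop ν (k i) g x ∂ν := by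
  rw [mul_comm C, ← lintegral_mul_const (f := fun x => h x * kop ν (k i) g x) _
    (hh.mul (H.meas_kop i hg))]
  rw [H.kop_adjoint j (H.meas_kop i hg) hh]
  refine lintegral_mono fun x => ?_
  rw [mul_assoc]
  gcongr
  unfold kop
  calc ∫⁻ y, k j x y * ∫⁻ z, k i y z * g z ∂ν ∂ν
      = ∫⁻ y, ∫⁻ z, k j x y * (k i y z * g z) ∂ν ∂ν := by
        refine lintegral_congr fun y => ?_
        exact (lintegral_const_mul _ ((H.meas_snd i y).mul hg)).symm
    _ = ∫⁻ z, ∫⁻ y, k j x y * (k i y z * g z) ∂ν ∂ν := by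
        rw [lintegral_lintegral_swap]
        exact (((H.meas_snd j x).comp measurable_fst).mul
          ((H.meas i).mul (hg.comp measurable_snd))).aemeasurable
    _ = ∫⁻ z, (∫⁻ y, k i z y * k j y x ∂ν) * g z ∂ν := by
        refine lintegral_congr fun z => ?_
        rw [← lintegral_mul_const (f := fun y => k i z y * k j y x) _
          ((H.meas_snd i z).mul (H.meas_fst j x))]
        refine lintegral_congr fun y => ?_
        rw [H.symm j x y, H.symm i y z]; ring
    _ ≤ ∫⁻ z, C * k i z x * g z ∂ν := by
        gcongr with z; exact H.comp i j hij z x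
    _ = (∫⁻ z, k i x z * g z ∂ν) * C := by
        rw [← lintegral_mul_const (f := fun z => k i x z * g z) _ ((H.meas_snd i x).mul hg)]
        refine lintegral_congr fun z => ?_
        rw [H.symm i z x]; ring

lemma KernelFamily.kop_le_const (H : KernelFamily ν k C) (j : ℕ) {h : X → ℝ≥0∞} {R : ℝ≥0∞}
    (hR : ∀ x, h x ≤ R) (x : X) : kop ν (k j) h x ≤ C * R := by
  calc kop ν (k j) h x ≤ ∫⁻ y, k j x y * R ∂ν := by unfold kop; gcongr with y; exact hR y
    _ = (∫⁻ y, k j x y ∂ν) * R := lintegral_mul_const _ (H.meas_snd j x)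
    _ ≤ _ := by gcongr; exact H.mass j x

/-- The dual form `‖∑ T_j g_j‖₂ ≤ 2 C ‖∑ g_j‖₂` of the maximal inequality. Expanding the square, each
product of two operators reduces to the coarser one, so that `∫ G² ≤ 2 C ∫ S G` with `G = ∑ T_j g_j`
and `S = ∑ g_j`. The bound `R` does not enter the estimate: it makes `∫ G²` finite, so that it can
be absorbed. -/
lemma KernelFamily.dual [IsFiniteMeasure ν] (H : KernelFamily ν k C) (hC : C ≠ ∞) (N : ℕ)
    {g : ℕ → X → ℝ≥0∞} (hg : ∀ j, Measurable (g j)) {R : ℝ≥0∞} (hR' : R ≠ ∞)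
    (hR : ∀ j x, g j x ≤ R) :
    ∫⁻ x, (∑ j ∈ Finset.range N, kop ν (k j) (g j) x) ^ 2 ∂ν ≤
      (2 * C) ^ 2 * ∫⁻ x, (∑ j ∈ Finset.range N, g j x) ^ 2 ∂ν := by
  set G : X → ℝ≥0∞ := fun x => ∑ j ∈ Finset.range N, kop ν (k j) (g j) x with hG
  set S : X → ℝ≥0∞ := fun x => ∑ j ∈ Finset.range N, g j x with hS
  have hGm : Measurable G := Finset.measurable_fun_sum _ fun j _ => H.meas_kop j (hg j)
  have hSm : Measurable S := Finset.measurable_fun_sum _ fun j _ => hg j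
  have hfin : ∫⁻ x, G x ^ 2 ∂ν ≠ ∞ := by
    have : ∀ x, G x ^ 2 ≤ (N * (C * R)) ^ 2 := by
      intro x
      gcongr
      calc G x ≤ ∑ j ∈ Finset.range N, C * R := Finset.sum_le_sum fun j _ =>
            H.kop_le_const j (hR j) x
        _ = _ := by simp
    refine ((lintegral_mono this).trans_lt ?_).ne
    rw [lintegral_const]
    refine ENNReal.mul_lt_top (ENNReal.pow_lt_top (ENNReal.mul_lt_top (by simp)
      (ENNReal.mul_lt_top hC.lt_top hR'.lt_top))) (measure_lt_top _ _)
  refine sq_le_of_le_sqrt_mul hfin ?_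
  refine le_trans ?_ (mul_le_mul_right (lintegral_mul_le_sqrt hSm hGm) _)
  have e1 : ∀ x, G x ^ 2 = ∑ i ∈ Finset.range N, ∑ j ∈ Finset.range N,
      kop ν (k i) (g i) x * kop ν (k j) (g j) x := fun x => by
    rw [hG, pow_two, Finset.sum_mul_sum]
  have mm : ∀ i j, Measurable fun x => kop ν (k i) (g i) x * kop ν (k j) (g j) x := fun i j =>
    (H.meas_kop i (hg i)).mul (H.meas_kop j (hg j))
  have nn : ∀ i j, Measurable fun x => g j x * kop ν (k i) (g i) x := fun i j =>
    (hg j).mul (H.meas_kop i (hg i))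
  have e2 : ∫⁻ x, S x * G x ∂ν = ∑ i ∈ Finset.range N, ∑ j ∈ Finset.range N,
      ∫⁻ x, g j x * kop ν (k i) (g i) x ∂ν := by
    have : ∀ x, S x * G x = ∑ i ∈ Finset.range N, ∑ j ∈ Finset.range N,
      g j x * kop ν (k i) (g i) x := fun x => by
      rw [hG, hS, Finset.sum_mul_sum, Finset.sum_comm]
    simp only [this]
    rw [lintegral_finsetSum _ fun i _ => Finset.measurable_fun_sum _ fun j _ => nn i j]
    exact Finset.sum_congr rfl fun i _ => lintegral_finsetSum _ fun j _ => nn i j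
  rw [lintegral_congr e1,
    lintegral_finsetSum _ fun i _ => Finset.measurable_fun_sum _ fun j _ => mm i j]
  calc ∑ i ∈ Finset.range N, ∫⁻ x, ∑ j ∈ Finset.range N,
        kop ν (k i) (g i) x * kop ν (k j) (g j) x ∂ν
      = ∑ i ∈ Finset.range N, ∑ j ∈ Finset.range N, ∫⁻ x,
        kop ν (k i) (g i) x * kop ν (k j) (g j) x ∂ν :=
        Finset.sum_congr rfl fun i _ => lintegral_finsetSum _ fun j _ => mm i j
    _ ≤ ∑ i ∈ Finset.range N, ∑ j ∈ Finset.range N,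
        (C * ∫⁻ x, g j x * kop ν (k i) (g i) x ∂ν + C * ∫⁻ x, g i x * kop ν (k j) (g j) x ∂ν) := by
        refine Finset.sum_le_sum fun i _ => Finset.sum_le_sum fun j _ => ?_
        rcases le_total i j with h | h
        · exact (H.kop_mul_kop h (hg i) (hg j)).trans le_self_add
        · refine le_trans (le_of_eq ?_) ((H.kop_mul_kop h (hg j) (hg i)).trans le_add_self)
          exact lintegral_congr fun x => mul_comm _ _
    _ = 2 * C * ∫⁻ x, S x * G x ∂ν := by
        rw [e2]
        simp only [Finset.sum_add_distrib, ← Finset.mul_sum]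
        rw [Finset.sum_comm (f := fun i j => ∫⁻ x, g i x * kop ν (k j) (g j) x ∂ν)]
        ring

/-- The maximal inequality in `L²`. The maximal function is linearized on disjoint sets where it
equals `T_j h`, and `KernelFamily.dual` is applied to the restrictions of the maximal function to
these sets. -/
lemma KernelFamily.maximal_sq [IsFiniteMeasure ν] (H : KernelFamily ν k C) (hC : C ≠ ∞) (N : ℕ)
    {h : X → ℝ≥0∞} (hh : Measurable h) {R : ℝ≥0∞} (hR' : R ≠ ∞) (hR : ∀ x, h x ≤ R) :
    ∫⁻ x, maxFn ν k N h x ^ 2 ∂ν ≤ (2 * C) ^ 2 * ∫⁻ x, h x ^ 2 ∂ν := by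
  set U := maxFn ν k N h with hU
  have hUm : Measurable U := H.meas_maxFn N hh
  have hUR : ∀ x, U x ≤ C * R := fun x => Finset.sup_le fun j _ => H.kop_le_const j hR x
  set E : ℕ → Set X := fun j => {x | kop ν (k j) h x = U x} with hE
  have hEm : ∀ j, MeasurableSet (E j) := fun j => measurableSet_eq_fun (H.meas_kop j hh) hUm
  set g : ℕ → X → ℝ≥0∞ := fun j => (disjointed E j).indicator U with hg
  have hgm : ∀ j, Measurable (g j) := fun j => hUm.indicator (MeasurableSet.disjointed hEm j)
  have hgR : ∀ j x, g j x ≤ C * R := fun j x =>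
    (indicator_le_self' (fun _ _ => zero_le) x).trans (hUR x)
  have hgS : ∀ x, ∑ j ∈ Finset.range N, g j x ≤ U x := by
    intro x
    by_cases hx : ∃ j, x ∈ disjointed E j
    · obtain ⟨j, hj⟩ := hx
      have hz : ∀ i, i ≠ j → g i x = 0 := fun i hi => by
        have : x ∉ disjointed E i := fun h' =>
          (Set.disjoint_left.1 (disjoint_disjointed E hi)) h' hj
        simp [hg, this]
      calc ∑ i ∈ Finset.range N, g i x ≤ ∑ i ∈ insert j (Finset.range N), g i x :=
            Finset.sum_le_sum_of_subset (Finset.subset_insert _ _)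
        _ = g j x := Finset.sum_eq_single_of_mem j (Finset.mem_insert_self _ _)
            fun i _ hi => hz i hi
        _ ≤ U x := indicator_le_self' (fun _ _ => zero_le) x
    · push Not at hx
      simp [hg, hx]
  have hgU : ∀ x, U x ^ 2 ≤ ∑ j ∈ Finset.range N, g j x * kop ν (k j) h x := by
    intro x
    rcases Nat.eq_zero_or_pos N with h0 | h0
    · simp [hU, maxFn, h0]
    · obtain ⟨j, hj, hjU⟩ := Finset.exists_mem_eq_sup (Finset.range N) ⟨0, by simpa using h0⟩
        fun j => kop ν (k j) h x
      classical
      have hex : ∃ j, x ∈ E j := ⟨j, hjU.symm⟩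
      set i := Nat.find hex with hi
      have hiE : x ∈ E i := Nat.find_spec hex
      have hiN : i < N := (Nat.find_le (h := hex) (n := j) hjU.symm).trans_lt (by simpa using hj)
      have hid : x ∈ disjointed E i := by
        rw [disjointed_eq_inter_compl]
        refine ⟨hiE, ?_⟩
        simp only [mem_iInter, mem_compl_iff]
        exact fun l hl => Nat.find_min hex hl
      calc U x ^ 2 = g i x * kop ν (k i) h x := by
            have : kop ν (k i) h x = U x := hiE
            simp [hg, hid, this, pow_two]
        _ ≤ _ := Finset.single_le_sum (f := fun j => g j x * kop ν (k j) h x)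
            (fun _ _ => zero_le) (by simpa using hiN)
  have hfin : ∫⁻ x, U x ^ 2 ∂ν ≠ ∞ := by
    refine ((lintegral_mono fun x => pow_le_pow_left' (hUR x) 2).trans_lt ?_).ne
    rw [lintegral_const]
    exact ENNReal.mul_lt_top (ENNReal.pow_lt_top
      (ENNReal.mul_lt_top hC.lt_top hR'.lt_top)) (measure_lt_top _ _)
  have hGm : Measurable fun x => ∑ j ∈ Finset.range N, kop ν (k j) (g j) x :=
    Finset.measurable_fun_sum _ fun j _ => H.meas_kop j (hgm j)
  set G : X → ℝ≥0∞ := fun x => ∑ j ∈ Finset.range N, kop ν (k j) (g j) x with hG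
  have h1 : ∫⁻ x, U x ^ 2 ∂ν ≤ ∫⁻ x, h x * G x ∂ν := by
    calc ∫⁻ x, U x ^ 2 ∂ν ≤ ∫⁻ x, ∑ j ∈ Finset.range N, g j x * kop ν (k j) h x ∂ν :=
          lintegral_mono hgU
      _ = ∑ j ∈ Finset.range N, ∫⁻ x, g j x * kop ν (k j) h x ∂ν :=
          lintegral_finsetSum _ fun j _ => (hgm j).mul (H.meas_kop j hh)
      _ = ∑ j ∈ Finset.range N, ∫⁻ x, h x * kop ν (k j) (g j) x ∂ν :=
          Finset.sum_congr rfl fun j _ => H.kop_adjoint j (hgm j) hh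
      _ = ∫⁻ x, ∑ j ∈ Finset.range N, h x * kop ν (k j) (g j) x ∂ν :=
          (lintegral_finsetSum _ fun j _ => hh.mul (H.meas_kop j (hgm j))).symm
      _ = _ := lintegral_congr fun x => (Finset.mul_sum _ _ _).symm
  have h2 : ∫⁻ x, G x ^ 2 ∂ν ≤ (2 * C) ^ 2 * ∫⁻ x, U x ^ 2 ∂ν :=
    (H.dual hC N hgm (ENNReal.mul_ne_top hC hR') hgR).trans
      (mul_le_mul_right (lintegral_mono fun x => pow_le_pow_left' (hgS x) 2) _)
  refine sq_le_of_le_sqrt_mul hfin ?_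
  calc ∫⁻ x, U x ^ 2 ∂ν ≤ (∫⁻ x, h x ^ 2 ∂ν) ^ (1 / 2 : ℝ) * (∫⁻ x, G x ^ 2 ∂ν) ^ (1 / 2 : ℝ) :=
        h1.trans (lintegral_mul_le_sqrt hh hGm)
    _ ≤ (∫⁻ x, h x ^ 2 ∂ν) ^ (1 / 2 : ℝ) *
        ((2 * C) ^ 2 * ∫⁻ x, U x ^ 2 ∂ν) ^ (1 / 2 : ℝ) := by gcongr
    _ = _ := by
        rw [ENNReal.mul_rpow_of_nonneg _ _ (by norm_num), ← ENNReal.rpow_natCast (2 * C) 2,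
          ← ENNReal.rpow_mul]
        norm_num
        ring

/-- Iterated Cauchy–Schwarz: a kernel operator of mass at most `C` satisfies
`(T h)^{2^a} ≤ C^{2^a - 1} T (h^{2^a})`. -/
lemma KernelFamily.kop_pow_le (H : KernelFamily ν k C) (j a : ℕ) {h : X → ℝ≥0∞}
    (hh : Measurable h) (x : X) :
    kop ν (k j) h x ^ 2 ^ a ≤ C ^ (2 ^ a - 1) * kop ν (k j) (fun y => h y ^ 2 ^ a) x := by
  induction a with
  | zero => simp
  | succ a ih =>
    have cs : kop ν (k j) (fun y => h y ^ 2 ^ a) x ^ 2 ≤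
        C * kop ν (k j) (fun y => h y ^ 2 ^ (a + 1)) x := by
      have hk := H.meas_snd j x
      have sq : ∀ x : ℝ≥0∞, (x ^ (1 / 2 : ℝ)) ^ 2 = x := fun x => by
        rw [← ENNReal.rpow_natCast, ← ENNReal.rpow_mul]; norm_num
      have e := lintegral_mul_le_sqrt (ν := ν) (f := fun y => k j x y ^ (1 / 2 : ℝ))
        (g := fun y => k j x y ^ (1 / 2 : ℝ) * h y ^ 2 ^ a) (by fun_prop) (by fun_prop)
      have e1 : ∀ y, k j x y ^ (1 / 2 : ℝ) * (k j x y ^ (1 / 2 : ℝ) * h y ^ 2 ^ a) =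
          k j x y * h y ^ 2 ^ a := fun y => by
        rw [← mul_assoc, ← pow_two, sq]
      have e2 : ∀ y, (k j x y ^ (1 / 2 : ℝ) * h y ^ 2 ^ a) ^ 2 = k j x y * h y ^ 2 ^ (a + 1) :=
        fun y => by rw [mul_pow, sq, ← pow_mul, pow_succ]
      simp only [e1, e2, sq] at e
      calc _ ≤ ((∫⁻ y, k j x y ∂ν) ^ (1 / 2 : ℝ) *
            (∫⁻ y, k j x y * h y ^ 2 ^ (a + 1) ∂ν) ^ (1 / 2 : ℝ)) ^ 2 := pow_le_pow_left' e 2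
        _ = (∫⁻ y, k j x y ∂ν) * ∫⁻ y, k j x y * h y ^ 2 ^ (a + 1) ∂ν := by
            rw [mul_pow, sq, sq]
        _ ≤ _ := by gcongr; exact H.mass j x; exact le_rfl
    calc kop ν (k j) h x ^ 2 ^ (a + 1) = (kop ν (k j) h x ^ 2 ^ a) ^ 2 := by
          rw [← pow_mul, pow_succ]
      _ ≤ (C ^ (2 ^ a - 1) * kop ν (k j) (fun y => h y ^ 2 ^ a) x) ^ 2 := by gcongr
      _ = C ^ ((2 ^ a - 1) * 2) * kop ν (k j) (fun y => h y ^ 2 ^ a) x ^ 2 := by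
          rw [mul_pow, ← pow_mul]
      _ ≤ C ^ ((2 ^ a - 1) * 2) * (C * kop ν (k j) (fun y => h y ^ 2 ^ (a + 1)) x) := by gcongr
      _ = _ := by
          rw [← mul_assoc, ← pow_succ]
          congr 2
          have := Nat.one_le_two_pow (n := a)
          rw [pow_succ]; omega

/-- The maximal inequality in `L^{2^(a+1)}`. -/
lemma KernelFamily.maximal_pow [IsFiniteMeasure ν] (H : KernelFamily ν k C) (hC : C ≠ ∞)
    (a N : ℕ) {h : X → ℝ≥0∞} (hh : Measurable h) {R : ℝ≥0∞} (hR' : R ≠ ∞) (hR : ∀ x, h x ≤ R) :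
    ∫⁻ x, maxFn ν k N h x ^ 2 ^ (a + 1) ∂ν ≤
      (C ^ (2 ^ a - 1)) ^ 2 * (2 * C) ^ 2 * ∫⁻ x, h x ^ 2 ^ (a + 1) ∂ν := by
  have key : ∀ x, maxFn ν k N h x ^ 2 ^ a ≤
      C ^ (2 ^ a - 1) * maxFn ν k N (fun y => h y ^ 2 ^ a) x := by
    intro x
    rcases Nat.eq_zero_or_pos N with h0 | h0
    · simp [maxFn, h0]
    · obtain ⟨j, hj, hjU⟩ := Finset.exists_mem_eq_sup (Finset.range N) ⟨0, by simpa using h0⟩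
        fun j => kop ν (k j) h x
      have : maxFn ν k N h x = kop ν (k j) h x := hjU
      rw [this]
      refine (H.kop_pow_le j a hh x).trans ?_
      gcongr
      exact Finset.le_sup (f := fun j => kop ν (k j) (fun y => h y ^ 2 ^ a) x) hj
  have hm : Measurable fun y => h y ^ 2 ^ a := hh.pow_const _
  calc ∫⁻ x, maxFn ν k N h x ^ 2 ^ (a + 1) ∂ν
      = ∫⁻ x, (maxFn ν k N h x ^ 2 ^ a) ^ 2 ∂ν := by simp only [← pow_mul, ← pow_succ]
    _ ≤ ∫⁻ x, (C ^ (2 ^ a - 1) * maxFn ν k N (fun y => h y ^ 2 ^ a) x) ^ 2 ∂ν :=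
        lintegral_mono fun x => pow_le_pow_left' (key x) 2
    _ = (C ^ (2 ^ a - 1)) ^ 2 * ∫⁻ x, maxFn ν k N (fun y => h y ^ 2 ^ a) x ^ 2 ∂ν := by
        simp only [mul_pow]
        exact lintegral_const_mul _ ((H.meas_maxFn N hm).pow_const 2)
    _ ≤ (C ^ (2 ^ a - 1)) ^ 2 * ((2 * C) ^ 2 * ∫⁻ x, (h x ^ 2 ^ a) ^ 2 ∂ν) := by
        gcongr
        exact H.maximal_sq hC N hm (R := R ^ 2 ^ a) (ENNReal.pow_ne_top hR')
          fun x => pow_le_pow_left' (hR x) _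
    _ = _ := by simp only [← pow_mul (h _), ← pow_succ, mul_assoc]

end Maximal

/-! ### Approximate identities on the circle -/

/-- The chordal distance from `e(u)` to `1` on the unit circle. -/
noncomputable def chord (u : Circ) : ℝ := ‖1 - (fourier 1 u : ℂ)‖

lemma chord_nonneg (u : Circ) : 0 ≤ chord u := norm_nonneg _

lemma continuous_chord : Continuous chord := by unfold chord; fun_prop

lemma chord_neg (u : Circ) : chord (-u) = chord u := by
  unfold chord
  have : (fourier 1 (-u) : ℂ) = conj (fourier 1 u : ℂ) := by
    rw [← fourier_neg]; simp [fourier_apply]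
  rw [this, ← RCLike.norm_conj (1 - (fourier 1 u : ℂ))]
  simp

lemma fourier_add_apply (k : ℤ) (u v : Circ) :
    (fourier k (u + v) : ℂ) = fourier k u * fourier k v := by
  simp [fourier_apply, toCircle_add]

lemma chord_add_le (u v : Circ) : chord (u + v) ≤ chord u + chord v := by
  unfold chord
  have : 1 - (fourier 1 (u + v) : ℂ) =
      (1 - fourier 1 u) + fourier 1 u * (1 - fourier 1 v) := by
    rw [fourier_add_apply]; ring
  rw [this]
  refine (norm_add_le _ _).trans ?_
  rw [norm_mul, norm_fourier_apply, one_mul]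

/-- The approximate identity `L / (1 + L² |1 - e(u)|²)` at frequency scale `L`. -/
noncomputable def bump (L : ℝ) (u : Circ) : ℝ := L / (1 + L ^ 2 * chord u ^ 2)

lemma bump_nonneg {L : ℝ} (hL : 0 ≤ L) (u : Circ) : 0 ≤ bump L u := by unfold bump; positivity

lemma continuous_bump (L : ℝ) : Continuous (bump L) := by
  unfold bump
  have := continuous_chord
  exact continuous_const.div (by fun_prop) fun u => by positivity

lemma bump_neg (L : ℝ) (u : Circ) : bump L (-u) = bump L u := by simp [bump, chord_neg]

lemma bump_sub_comm (L : ℝ) (u v : Circ) : bump L (u - v) = bump L (v - u) := by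
  rw [← bump_neg, neg_sub]

/-- Quasi-triangle inequality for the kernels at two scales: one of `u`, `v` is at least half as far
from `0` as `u + v`, so one of the two factors is dominated by the coarser kernel at `u + v`. -/
lemma bump_mul_bump_le {L M : ℝ} (hL : 0 < L) (hLM : L ≤ M) (u v : Circ) :
    bump L u * bump M v ≤ 8 * bump L (u + v) * (bump L u + bump M v) := by
  have hM : 0 < M := hL.trans_le hLM
  have hu := bump_nonneg hL.le u
  have hv := bump_nonneg hM.le v
  have hw := bump_nonneg hL.le (u + v)
  set a := chord u with ha
  set b := chord v with hb
  set d := chord (u + v) with hd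
  have ha0 : 0 ≤ a := chord_nonneg u
  have hb0 : 0 ≤ b := chord_nonneg v
  have hd0 : 0 ≤ d := chord_nonneg _
  have htri : d ≤ a + b := chord_add_le u v
  -- it suffices that one of the two factors is dominated by the kernel at `u + v`
  suffices h : bump L u ≤ 8 * bump L (u + v) ∨ bump M v ≤ 8 * bump L (u + v) by
    rcases h with h | h
    · nlinarith
    · nlinarith
  have A : ∀ x : ℝ, 0 ≤ x → d / 2 ≤ x → L / (1 + L ^ 2 * x ^ 2) ≤ 4 * (L / (1 + L ^ 2 * d ^ 2)) := by
    intro x hx hdx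
    rw [div_le_iff₀ (by positivity), mul_assoc, div_mul_eq_mul_div, mul_div_assoc',
      le_div_iff₀ (by positivity)]
    have : d ^ 2 ≤ 4 * x ^ 2 := by nlinarith
    have h2 : L ^ 2 * d ^ 2 ≤ L ^ 2 * (4 * x ^ 2) := by gcongr
    nlinarith
  rcases le_total (d / 2) a with h | h
  · left
    have := A a ha0 h
    unfold bump at hw ⊢
    linarith
  · have h' : d / 2 ≤ b := by linarith
    rcases le_total 1 (L * d) with h1 | h1
    · right
      unfold bump
      rw [← hb, ← hd, mul_div_assoc', div_le_div_iff₀ (by positivity) (by positivity)]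
      -- here `L b ≥ 1 / 2`, and `bump M v ≤ 1 / (M b²) ≤ 1 / (L b²)`
      have hLd : 1 ≤ L ^ 2 * d ^ 2 := by nlinarith
      have e1 : d ^ 2 ≤ 4 * b ^ 2 := by nlinarith
      have e2 : M * (1 + L ^ 2 * d ^ 2) ≤ M * (2 * L ^ 2 * (4 * b ^ 2)) := by
        gcongr
        nlinarith [mul_le_mul_of_nonneg_left e1 (sq_nonneg L)]
      have e3 : M * (2 * L ^ 2 * (4 * b ^ 2)) ≤ 8 * L * (M ^ 2 * b ^ 2) := by
        have : L * (8 * L * M * b ^ 2) ≤ M * (8 * L * M * b ^ 2) := by gcongr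
        nlinarith
      nlinarith
    · left
      unfold bump
      rw [← ha, ← hd, mul_div_assoc', div_le_div_iff₀ (by positivity) (by positivity)]
      have hLd : L ^ 2 * d ^ 2 ≤ 1 := by
        rw [← mul_pow]; exact pow_le_one₀ (by positivity) h1
      have : 0 ≤ L ^ 2 * a ^ 2 := by positivity
      nlinarith

/-- The Poisson kernel has mass `1`. -/
lemma integral_poisson {r : ℝ} (h0 : 0 ≤ r) (h1 : r < 1) :
    (1 - r ^ 2) * ∫ u, ‖(1 - r * (fourier 1 u : ℂ))⁻¹‖ ^ 2 ∂mu = 1 := by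
  set g : Circ → ℂ := fun u => (1 - r * (fourier 1 u : ℂ))⁻¹ with hg
  have hlow : ∀ u : Circ, 1 - r ≤ ‖1 - r * (fourier 1 u : ℂ)‖ := fun u => by
    have := norm_sub_norm_le (1 : ℂ) (r * (fourier 1 u : ℂ))
    rw [norm_mul, norm_fourier_apply] at this
    simpa [abs_of_nonneg h0] using this
  have hne : ∀ u : Circ, 1 - r * (fourier 1 u : ℂ) ≠ 0 := fun u hu => by
    have := hlow u; rw [hu, norm_zero] at this; linarith
  have hgc : Continuous g := by
    apply Continuous.inv₀ (by fun_prop) hne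
  have hgb : ∀ u, ‖g u‖ ≤ (1 - r)⁻¹ := fun u => by
    rw [hg, norm_inv]; exact inv_anti₀ (by linarith) (hlow u)
  have hgr : ∀ u, g u = 1 + r * (fourier 1 u : ℂ) * g u := fun u => by
    have : (1 - r * (fourier 1 u : ℂ)) * g u = 1 := mul_inv_cancel₀ (hne u)
    linear_combination this
  set c : ℕ → ℂ := fun n => ∫ u, (fourier (n : ℤ) u : ℂ) * g u ∂mu with hc
  have hrec : ∀ n, c n = (if n = 0 then 1 else 0) + r * c (n + 1) := by
    intro n
    have : ∀ u, (fourier (n : ℤ) u : ℂ) * g u =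
        fourier (n : ℤ) u + r * ((fourier ((n + 1 : ℕ) : ℤ) u : ℂ) * g u) := fun u => by
      conv_lhs => rw [hgr u]
      push_cast
      rw [fourier_add]; ring
    simp only [hc]
    rw [integral_congr_ae (ae_of_all _ this), integral_add (cint (by fun_prop)) (cint (by fun_prop)),
      integral_fourier_eq, integral_const_mul]
    simp
  have hcb : ∀ n, ‖c n‖ ≤ (1 - r)⁻¹ := fun n => by
    refine (norm_integral_le_of_norm_le_const (C := (1 - r)⁻¹) (ae_of_all _ fun u => ?_)).trans ?_
    · rw [norm_mul, norm_fourier_apply, one_mul]; exact hgb u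
    · simp
  have hpow : ∀ n, c 1 = r ^ n * c (n + 1) := by
    intro n
    induction n with
    | zero => simp
    | succ n ih => rw [ih, hrec (n + 1)]; simp; ring
  have hc1 : c 1 = 0 := by
    have ht : Tendsto (fun n : ℕ => r ^ n * (1 - r)⁻¹) atTop (nhds (0 * (1 - r)⁻¹)) :=
      (tendsto_pow_atTop_nhds_zero_of_lt_one h0 h1).mul_const _
    rw [zero_mul] at ht
    have : ‖c 1‖ ≤ 0 := ge_of_tendsto' ht fun n => by
      rw [hpow n, norm_mul]
      have : ‖((r : ℂ) ^ n)‖ = r ^ n := by simp [abs_of_nonneg h0]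
      rw [this]
      gcongr
      exact hcb _
    simpa using this
  have hint : ∫ u, g u ∂mu = 1 := by
    have := hrec 0
    rw [hc1] at this
    simpa [hc] using this
  have hpt : ∀ u, (1 - r ^ 2) * ‖g u‖ ^ 2 = 2 * (g u).re - 1 := fun u => by
    have e : r * (fourier 1 u : ℂ) * g u = g u - 1 := by linear_combination -hgr u
    have e2 : ‖r * (fourier 1 u : ℂ) * g u‖ ^ 2 = r ^ 2 * ‖g u‖ ^ 2 := by
      rw [norm_mul, norm_mul, norm_fourier_apply]; simp [mul_pow]
    rw [e, ← Complex.normSq_eq_norm_sq, Complex.normSq_apply] at e2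
    have e3 : ‖g u‖ ^ 2 = (g u).re * (g u).re + (g u).im * (g u).im := by
      rw [← Complex.normSq_eq_norm_sq, Complex.normSq_apply]
    simp at e2
    nlinarith
  rw [← integral_const_mul, integral_congr_ae (ae_of_all _ hpt),
    integral_sub (cint (by fun_prop)) (cint (by fun_prop)), integral_const_mul]
  have hre : ∫ u, (g u).re ∂mu = 1 := by
    have := integral_re (𝕜 := ℂ) (cint hgc)
    simp only [RCLike.re_to_complex] at this
    rw [this, hint]; simp
  rw [hre]; simp; norm_num

/-- The kernel is dominated by twice the Poisson kernel with `r = 1 - 1 / (2 L)`. -/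
lemma integral_bump_le {L : ℝ} (hL : 1 ≤ L) : ∫ u, bump L u ∂mu ≤ 2 := by
  set r : ℝ := 1 - 1 / (2 * L) with hr
  have hL0 : 0 < L := by linarith
  have hi : 1 / (2 * L) ≤ 1 / 2 := by
    apply one_div_le_one_div_of_le <;> linarith
  have hi0 : 0 < 1 / (2 * L) := by positivity
  have h0 : 1 / 2 ≤ r := by rw [hr]; linarith
  have h1 : r < 1 := by rw [hr]; linarith
  have hP := integral_poisson (by linarith : 0 ≤ r) h1
  have hpt : ∀ u, bump L u ≤ 2 * ((1 - r ^ 2) * ‖(1 - r * (fourier 1 u : ℂ))⁻¹‖ ^ 2) := by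
    intro u
    have hz : ‖1 - r * (fourier 1 u : ℂ)‖ ^ 2 = (1 - r) ^ 2 + r * chord u ^ 2 := by
      have hn : (fourier 1 u : ℂ).re * (fourier 1 u : ℂ).re +
          (fourier 1 u : ℂ).im * (fourier 1 u : ℂ).im = 1 := by
        rw [← Complex.normSq_apply, Complex.normSq_eq_norm_sq, norm_fourier_apply, one_pow]
      unfold chord
      rw [← Complex.normSq_eq_norm_sq, ← Complex.normSq_eq_norm_sq, Complex.normSq_apply,
        Complex.normSq_apply]
      simp only [Complex.sub_re, Complex.one_re, Complex.mul_re, Complex.ofReal_re,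
        Complex.ofReal_im, zero_mul, sub_zero, Complex.sub_im, Complex.one_im, Complex.mul_im,
        add_zero, zero_sub]
      linear_combination (r ^ 2 - r) * hn
    rw [norm_inv, inv_pow, hz, ← div_eq_mul_inv, mul_div_assoc', bump]
    have hpos : 0 < (1 - r) ^ 2 + r * chord u ^ 2 := by
      have : 0 < (1 - r) ^ 2 := by apply pow_pos; linarith
      have : 0 ≤ r * chord u ^ 2 := by
        have := sq_nonneg (chord u)
        nlinarith
      linarith
    rw [div_le_div_iff₀ (by positivity) hpos]
    have e : 1 - r = 1 / (2 * L) := by rw [hr]; ring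
    have e1 : 2 * L * (1 - r) = 1 := by rw [e]; field_simp
    have hd := sq_nonneg (chord u)
    have hlow : 1 ≤ 2 * (1 - r ^ 2) * L := by nlinarith
    have hle : (1 - r) ^ 2 + r * chord u ^ 2 ≤ (1 + L ^ 2 * chord u ^ 2) / L ^ 2 := by
      rw [add_div, mul_div_cancel_left₀ _ (by positivity)]
      gcongr
      · rw [e]; rw [div_pow]; gcongr; · norm_num
        · linarith
      · nlinarith
    calc L * ((1 - r) ^ 2 + r * chord u ^ 2) ≤ L * ((1 + L ^ 2 * chord u ^ 2) / L ^ 2) := by gcongr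
      _ = 1 / L * (1 + L ^ 2 * chord u ^ 2) := by field_simp
      _ ≤ _ := by
        gcongr
        rw [div_le_iff₀ hL0]
        linarith
  have hc : Continuous fun u : Circ => ‖(1 - r * (fourier 1 u : ℂ))⁻¹‖ ^ 2 := by
    have : Continuous fun u : Circ => (1 - r * (fourier 1 u : ℂ))⁻¹ := by
      apply Continuous.inv₀ (by fun_prop)
      intro u hu
      have : ‖(r : ℂ) * (fourier 1 u : ℂ)‖ = 1 := by rw [← sub_eq_zero.1 hu]; simp
      rw [norm_mul, norm_fourier_apply] at this
      simp [abs_of_nonneg (by linarith : 0 ≤ r)] at this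
      linarith
    fun_prop
  calc ∫ u, bump L u ∂mu ≤ ∫ u, 2 * ((1 - r ^ 2) * ‖(1 - r * (fourier 1 u : ℂ))⁻¹‖ ^ 2) ∂mu :=
        integral_mono (cint (continuous_bump L)) (cint (by fun_prop)) hpt
    _ = 2 := by rw [integral_const_mul, integral_const_mul, hP, mul_one]

lemma lintegral_bump_le {L : ℝ} (hL : 1 ≤ L) : ∫⁻ u, ENNReal.ofReal (bump L u) ∂mu ≤ 2 := by
  rw [← ofReal_integral_eq_lintegral_ofReal (cint (continuous_bump L))
    (ae_of_all _ fun u => bump_nonneg (by linarith) u)]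
  refine (ENNReal.ofReal_le_ofReal (integral_bump_le hL)).trans ?_
  simp

lemma measurable_bump (L : ℝ) : Measurable fun u => ENNReal.ofReal (bump L u) :=
  (ENNReal.continuous_ofReal.comp (continuous_bump L)).measurable

/-- Integrating the quasi-triangle inequality in the intermediate point gives the composition property
required of a `KernelFamily`. -/
lemma kernelFamily_bump {Λ : ℕ → ℝ} (h1 : ∀ j, 1 ≤ Λ j) (hm : Monotone Λ) :
    KernelFamily mu (fun j x y => ENNReal.ofReal (bump (Λ j) (x - y))) 32 where
  meas j := ((ENNReal.continuous_ofReal.comp (continuous_bump (Λ j))).comp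
    (continuous_fst.sub continuous_snd)).measurable
  symm j x y := by rw [bump_sub_comm]
  mass j x := by
    rw [lintegral_sub_left_eq_self (fun u => ENNReal.ofReal (bump (Λ j) u)) x]
    exact (lintegral_bump_le (h1 j)).trans (by norm_num)
  comp i j hij x y := by
    have mi : Measurable fun z => ENNReal.ofReal (bump (Λ i) (x - z)) :=
      (measurable_bump (Λ i)).comp (measurable_const_sub x)
    have mj : Measurable fun z => ENNReal.ofReal (bump (Λ j) (z - y)) :=
      (measurable_bump (Λ j)).comp (measurable_sub_const y)
    have hpt : ∀ z, ENNReal.ofReal (bump (Λ i) (x - z)) * ENNReal.ofReal (bump (Λ j) (z - y)) ≤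
        8 * ENNReal.ofReal (bump (Λ i) (x - y)) *
          (ENNReal.ofReal (bump (Λ i) (x - z)) + ENNReal.ofReal (bump (Λ j) (z - y))) := by
      intro z
      have p0 : ∀ j u, 0 ≤ bump (Λ j) u := fun j u => bump_nonneg (by linarith [h1 j]) u
      have := bump_mul_bump_le (by linarith [h1 i]) (hm hij) (x - z) (z - y)
      rw [sub_add_sub_cancel] at this
      have h8 : (8 : ℝ≥0∞) = ENNReal.ofReal 8 := by simp
      rw [← ENNReal.ofReal_mul (p0 _ _), ← ENNReal.ofReal_add (p0 _ _) (p0 _ _), h8,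
        ← ENNReal.ofReal_mul (by norm_num),
        ← ENNReal.ofReal_mul (mul_nonneg (by norm_num) (p0 _ _))]
      exact ENNReal.ofReal_le_ofReal this
    refine (lintegral_mono hpt).trans ?_
    rw [lintegral_const_mul' _ _ (ENNReal.mul_ne_top (by simp) (by simp)), lintegral_add_left mi]
    have i1 : ∫⁻ z, ENNReal.ofReal (bump (Λ i) (x - z)) ∂mu ≤ 2 := by
      rw [lintegral_sub_left_eq_self (fun u => ENNReal.ofReal (bump (Λ i) u)) x]
      exact lintegral_bump_le (h1 i)
    have i2 : ∫⁻ z, ENNReal.ofReal (bump (Λ j) (z - y)) ∂mu ≤ 2 := by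
      rw [lintegral_sub_right_eq_self (fun u => ENNReal.ofReal (bump (Λ j) u)) y]
      exact lintegral_bump_le (h1 j)
    calc _ ≤ 8 * ENNReal.ofReal (bump (Λ i) (x - y)) * (2 + 2) := by gcongr
      _ = 32 * ENNReal.ofReal (bump (Λ i) (x - y)) := by ring

/-! ### Smooth lacunary projections -/

/-- The `ξ`-th Fourier coefficient as a linear functional on continuous functions. -/
noncomputable def cf (ξ : ℤ) : Tor →ₗ[ℂ] ℂ where
  toFun g := ∫ x, (fourier (-ξ) x : ℂ) * g x ∂mu
  map_add' f g := by
    rw [← integral_add (cint (by fun_prop)) (cint (by fun_prop))]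
    simp [mul_add]
  map_smul' c f := by
    rw [RingHom.id_apply, smul_eq_mul, ← integral_const_mul]
    congr 1; ext x; simp; ring

lemma cf_apply (ξ : ℤ) (g : Tor) : cf ξ g = ∫ x, (fourier (-ξ) x : ℂ) * g x ∂mu := rfl

lemma cf_fourier (ξ l : ℤ) : cf ξ (fourier l) = if l = ξ then 1 else 0 := by
  rw [cf_apply]
  have : ∀ x : Circ, (fourier (-ξ) x : ℂ) * fourier l x = fourier (l - ξ) x := fun x => by
    rw [← fourier_add]; congr 2; ring
  simp only [this, integral_fourier_eq, sub_eq_zero]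

lemma cf_fourier_mul (ξ l : ℤ) (g : Tor) : cf ξ (fourier l * g) = cf (ξ - l) g := by
  rw [cf_apply, cf_apply]
  congr 1; ext x
  have : -(ξ - l) = -ξ + l := by ring
  rw [this, fourier_add, ContinuousMap.mul_apply, mul_assoc]

/-- Parseval's identity. -/
lemma hasSum_sq_cf (g : Tor) : HasSum (fun ξ => ‖cf ξ g‖ ^ 2) (∫ x, ‖g x‖ ^ 2 ∂mu) := by
  have h := hasSum_sq_fourierCoeff (ContinuousMap.toLp (E := ℂ) 2 haarAddCircle ℂ g)
  have e : ∀ ξ, fourierCoeff (ContinuousMap.toLp (E := ℂ) 2 haarAddCircle ℂ g) ξ = cf ξ g := by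
    intro ξ
    rw [fourierCoeff_toLp]; rfl
  simp only [e] at h
  convert h using 1
  refine integral_congr_ae ?_
  filter_upwards [ContinuousMap.coeFn_toLp (p := 2) (𝕜 := ℂ) haarAddCircle g] with x hx
  rw [hx]

/-- A trapezoidal multiplier equal to `1` on `[3^k/2, 3^k]` and supported in
`(3^k/4, 5·3^k/4)`. -/
noncomputable def mult (k : ℕ) (ξ : ℤ) : ℝ :=
  max 0 (min 1 (min (4 * (ξ / 3 ^ k) - 1) (5 - 4 * (ξ / 3 ^ k))))

lemma mult_nonneg (k : ℕ) (ξ : ℤ) : 0 ≤ mult k ξ := le_max_left _ _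

lemma mult_le_one (k : ℕ) (ξ : ℤ) : mult k ξ ≤ 1 :=
  max_le zero_le_one (min_le_left _ _)

lemma mult_eq_one {k : ℕ} {ξ : ℤ} (h1 : 3 ^ k < 2 * ξ) (h2 : ξ ≤ 3 ^ k) : mult k ξ = 1 := by
  have h1' : (3 : ℝ) ^ k < 2 * ξ := by exact_mod_cast h1
  have h2' : (ξ : ℝ) ≤ 3 ^ k := by exact_mod_cast h2
  have a : 1 / 2 ≤ (ξ : ℝ) / 3 ^ k := by rw [le_div_iff₀ (by positivity)]; linarith
  have b : (ξ : ℝ) / 3 ^ k ≤ 1 := by rw [div_le_one (by positivity)]; exact h2'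
  rw [mult, min_eq_left (le_min (by linarith) (by linarith)), max_eq_right zero_le_one]

lemma mult_support {k : ℕ} {ξ : ℤ} (h : mult k ξ ≠ 0) : 3 ^ k < 4 * ξ ∧ 4 * ξ < 5 * 3 ^ k := by
  have hpos : 0 < mult k ξ := lt_of_le_of_ne (mult_nonneg _ _) h.symm
  rw [mult, lt_max_iff] at hpos
  rcases hpos with h | h
  · exact absurd h (lt_irrefl _)
  · rw [lt_min_iff, lt_min_iff] at h
    have a : 1 / 4 < (ξ : ℝ) / 3 ^ k := by linarith [h.2.1]
    have b : (ξ : ℝ) / 3 ^ k < 5 / 4 := by linarith [h.2.2]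
    rw [lt_div_iff₀ (by positivity)] at a
    rw [div_lt_iff₀ (by positivity)] at b
    constructor
    · have : (3 : ℝ) ^ k < 4 * ξ := by linarith
      exact_mod_cast this
    · have : (4 : ℝ) * ξ < 5 * 3 ^ k := by linarith
      exact_mod_cast this

/-- The multiplier is Lipschitz at scale `3^k`. -/
lemma mult_diff (k : ℕ) (ξ : ℤ) : |mult k (ξ - 1) - mult k ξ| ≤ 4 / 3 ^ k := by
  unfold mult
  have h := abs_max_sub_max_le_abs (min 1 (min (4 * (((ξ - 1 : ℤ) : ℝ) / 3 ^ k) - 1)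
    (5 - 4 * (((ξ - 1 : ℤ) : ℝ) / 3 ^ k)))) (min 1 (min (4 * ((ξ : ℝ) / 3 ^ k) - 1)
    (5 - 4 * ((ξ : ℝ) / 3 ^ k)))) 0
  rw [max_comm 0, max_comm 0]
  refine h.trans ?_
  refine (abs_min_sub_min_le_max _ _ _ _).trans ?_
  have e : ((ξ - 1 : ℤ) : ℝ) / 3 ^ k = (ξ : ℝ) / 3 ^ k - 1 / 3 ^ k := by push_cast; ring
  have h4 : (0 : ℝ) ≤ 4 / 3 ^ k := by positivity
  refine max_le (by simpa using h4) ?_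
  refine (abs_min_sub_min_le_max _ _ _ _).trans (max_le ?_ ?_)
  · rw [e, show 4 * ((ξ : ℝ) / 3 ^ k - 1 / 3 ^ k) - 1 - (4 * ((ξ : ℝ) / 3 ^ k) - 1) = -(4 / 3 ^ k) by
      ring, abs_neg, abs_of_nonneg h4]
  · rw [e, show 5 - 4 * ((ξ : ℝ) / 3 ^ k - 1 / 3 ^ k) - (5 - 4 * ((ξ : ℝ) / 3 ^ k)) = 4 / 3 ^ k by
      ring, abs_of_nonneg h4]

/-- At most two of the multipliers are active at a given frequency. -/
lemma sum_mult_sq_le (s : Finset ℕ) (ξ : ℤ) : ∑ k ∈ s, mult k ξ ^ 2 ≤ 2 := by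
  classical
  set t := s.filter fun k => mult k ξ ≠ 0 with ht
  have h1 : ∑ k ∈ s, mult k ξ ^ 2 = ∑ k ∈ t, mult k ξ ^ 2 := by
    rw [ht, Finset.sum_filter_of_ne]
    intro k _ hk h; exact hk (by rw [h]; simp)
  have hcard : t.card ≤ 2 := by
    rcases t.eq_empty_or_nonempty with h0 | h0
    · simp [h0]
    · have hm := t.min'_mem h0
      set k₀ := t.min' h0
      have hsub : t ⊆ {k₀, k₀ + 1} := by
        intro k hk
        have hle : k₀ ≤ k := t.min'_le k hk
        have a := mult_support (Finset.mem_filter.1 hk).2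
        have b := mult_support (Finset.mem_filter.1 hm).2
        have hlt : k < k₀ + 2 := by
          by_contra hcon
          push Not at hcon
          have : (3 : ℤ) ^ (k₀ + 2) ≤ 3 ^ k := pow_le_pow_right₀ (by norm_num) hcon
          rw [pow_add] at this
          have h3 : (0 : ℤ) < 3 ^ k₀ := by positivity
          linarith [a.1, b.2]
        simp only [Finset.mem_insert, Finset.mem_singleton]
        omega
      exact (Finset.card_le_card hsub).trans Finset.card_le_two
  rw [h1]
  calc ∑ k ∈ t, mult k ξ ^ 2 ≤ ∑ k ∈ t, 1 :=
        Finset.sum_le_sum fun k _ => pow_le_one₀ (mult_nonneg _ _) (mult_le_one _ _)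
    _ ≤ 2 := by simpa using (by exact_mod_cast hcard : (t.card : ℝ) ≤ 2)

/-- The smooth lacunary projection at scale `3^k`. -/
noncomputable def smoothBlock (k : ℕ) (f : Tor) : Tor :=
  ∑ ξ ∈ Finset.Icc (0 : ℤ) (2 * 3 ^ k), ((mult k ξ : ℂ) * cf ξ f) • (fourier ξ : Tor)

lemma smoothBlock_mem (k : ℕ) (f : Tor) : smoothBlock k f ∈ Sp (Icc 0 (2 * 3 ^ k)) :=
  Submodule.sum_mem _ fun ξ hξ => Submodule.smul_mem _ _
    (fourier_mem_Sp (by simpa using hξ))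

lemma cf_smoothBlock (k : ℕ) (f : Tor) (η : ℤ) :
    cf η (smoothBlock k f) = mult k η * cf η f := by
  unfold smoothBlock
  simp only [map_sum, map_smul, cf_fourier, smul_eq_mul, mul_ite, mul_one, mul_zero]
  rw [Finset.sum_ite_eq']
  split_ifs with h
  · rfl
  · have : mult k η = 0 := by
      by_contra h0
      have := mult_support h0
      have h3 : (0 : ℤ) < 3 ^ k := by positivity
      exact h (Finset.mem_Icc.2 ⟨by omega, by linarith⟩)
    simp [this]

/-- Discrete Leibniz rule: the multiplier nearly commutes with multiplication by a trigonometric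
polynomial of small degree. -/
lemma cf_mul_smoothBlock (k L : ℕ) (c : ℕ → ℂ) (f : Tor) (ξ : ℤ) :
    cf ξ ((∑ l ∈ Finset.range L, c l • (fourier (l : ℤ) : Tor)) * smoothBlock k f) =
      mult k ξ * cf ξ ((∑ l ∈ Finset.range L, c l • (fourier (l : ℤ) : Tor)) * f) +
      ∑ i ∈ Finset.range L, ((mult k (ξ - i - 1) - mult k (ξ - i) : ℝ) : ℂ) *
        cf ξ ((∑ l ∈ Finset.Ioo i L, c l • (fourier (l : ℤ) : Tor)) * f) := by
  have tel : ∀ l : ℕ, mult k (ξ - l) =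
      mult k ξ + ∑ i ∈ Finset.range l, (mult k (ξ - i - 1) - mult k (ξ - i)) := by
    intro l
    have := Finset.sum_range_sub (fun i : ℕ => mult k (ξ - i)) l
    simp only [Nat.cast_add, Nat.cast_one, Nat.cast_zero, sub_zero] at this
    have e : ∀ i : ℕ, ξ - ((i : ℤ) + 1) = ξ - i - 1 := fun i => by ring
    simp only [e] at this
    rw [this]; ring
  have ex : ∀ (s : Finset ℕ) (g : Tor),
      cf ξ ((∑ l ∈ s, c l • (fourier (l : ℤ) : Tor)) * g) = ∑ l ∈ s, c l * cf (ξ - l) g := by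
    intro s g
    simp only [Finset.sum_mul, smul_mul_assoc, map_sum, map_smul, cf_fourier_mul, smul_eq_mul]
  simp only [ex, cf_smoothBlock]
  have hsw : ∑ i ∈ Finset.range L, ((mult k (ξ - i - 1) - mult k (ξ - i) : ℝ) : ℂ) *
        ∑ l ∈ Finset.Ioo i L, c l * cf (ξ - l) f =
      ∑ l ∈ Finset.range L, ∑ i ∈ Finset.range l,
        ((mult k (ξ - i - 1) - mult k (ξ - i) : ℝ) : ℂ) * (c l * cf (ξ - l) f) := by
    simp only [Finset.mul_sum]
    apply Finset.sum_comm'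
    intro i l
    simp only [Finset.mem_range, Finset.mem_Ioo]
    omega
  rw [hsw, Finset.mul_sum, ← Finset.sum_add_distrib]
  refine Finset.sum_congr rfl fun l _ => ?_
  rw [tel l, ← Finset.sum_mul]
  push_cast
  ring

lemma sum_inv_nine_le (j N : ℕ) : ∑ k ∈ Finset.Ico j N, (16 : ℝ) / 9 ^ k ≤ 18 / 9 ^ j := by
  have h : ∀ n, ∑ k ∈ Finset.Ico j (j + n), (16 : ℝ) / 9 ^ k = 18 / 9 ^ j - 18 / 9 ^ (j + n) := by
    intro n
    induction n with
    | zero => simp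
    | succ n ih =>
      rw [← add_assoc, Finset.sum_Ico_succ_top (by omega), ih, pow_succ]
      field_simp; ring
  rcases le_total j N with hj | hj
  · obtain ⟨n, rfl⟩ := Nat.exists_eq_add_of_le hj
    rw [h]
    have : (0 : ℝ) ≤ 18 / 9 ^ (j + n) := by positivity
    linarith
  · rw [Finset.Ico_eq_empty (by omega)]; simp; positivity

/-- Localised square function estimate: testing the tail of the square function against the square
of a polynomial of degree `< L` costs a commutator term whose size is governed by `L / 3^j`. -/
lemma local_square (j N L : ℕ) (c : ℕ → ℂ) (f : Tor) :
    ∑ k ∈ Finset.Ico j N, ∫ x, ‖((∑ l ∈ Finset.range L, c l • (fourier (l : ℤ) : Tor)) *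
        smoothBlock k f) x‖ ^ 2 ∂mu ≤
      4 * ∫ x, ‖((∑ l ∈ Finset.range L, c l • (fourier (l : ℤ) : Tor)) * f) x‖ ^ 2 ∂mu +
      36 * L / 9 ^ j * ∑ i ∈ Finset.range L,
        ∫ x, ‖((∑ l ∈ Finset.Ioo i L, c l • (fourier (l : ℤ) : Tor)) * f) x‖ ^ 2 ∂mu := by
  have hl := hasSum_sum (s := Finset.Ico j N) fun k _ =>
    hasSum_sq_cf ((∑ l ∈ Finset.range L, c l • (fourier (l : ℤ) : Tor)) * smoothBlock k f)
  have hr := ((hasSum_sq_cf ((∑ l ∈ Finset.range L, c l • (fourier (l : ℤ) : Tor)) * f)).mul_left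
    4).add ((hasSum_sum (s := Finset.range L) fun i _ =>
      hasSum_sq_cf ((∑ l ∈ Finset.Ioo i L, c l • (fourier (l : ℤ) : Tor)) * f)).mul_left
        (36 * (L : ℝ) / 9 ^ j))
  refine hasSum_le (fun ξ => ?_) hl hr
  simp only [cf_mul_smoothBlock]
  set a := cf ξ ((∑ l ∈ Finset.range L, c l • (fourier (l : ℤ) : Tor)) * f)
  set b : ℕ → ℂ := fun i => cf ξ ((∑ l ∈ Finset.Ioo i L, c l • (fourier (l : ℤ) : Tor)) * f)
  have hk : ∀ k, ‖(mult k ξ : ℂ) * a + ∑ i ∈ Finset.range L,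
      ((mult k (ξ - i - 1) - mult k (ξ - i) : ℝ) : ℂ) * b i‖ ^ 2 ≤
      2 * (mult k ξ ^ 2 * ‖a‖ ^ 2) + 2 * L * (16 / 9 ^ k * ∑ i ∈ Finset.range L, ‖b i‖ ^ 2) := by
    intro k
    have h1 : ‖∑ i ∈ Finset.range L, ((mult k (ξ - i - 1) - mult k (ξ - i) : ℝ) : ℂ) * b i‖ ^ 2 ≤
        L * (16 / 9 ^ k * ∑ i ∈ Finset.range L, ‖b i‖ ^ 2) := by
      calc _ ≤ (∑ i ∈ Finset.range L, 4 / 3 ^ k * ‖b i‖) ^ 2 := by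
            gcongr
            refine (norm_sum_le _ _).trans (Finset.sum_le_sum fun i _ => ?_)
            rw [norm_mul, Complex.norm_real]
            gcongr
            exact mult_diff k (ξ - i)
        _ ≤ L * ∑ i ∈ Finset.range L, (4 / 3 ^ k * ‖b i‖) ^ 2 := by
            simpa using sq_sum_le_card_mul_sum_sq (s := Finset.range L)
              (f := fun i => 4 / 3 ^ k * ‖b i‖)
        _ = _ := by
            rw [Finset.mul_sum (a := (16 : ℝ) / 9 ^ k)]
            congr 1
            refine Finset.sum_congr rfl fun i _ => ?_
            rw [mul_pow, div_pow, ← pow_mul, mul_comm k 2, pow_mul]; norm_num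
    have h2 : ‖(mult k ξ : ℂ) * a‖ ^ 2 = mult k ξ ^ 2 * ‖a‖ ^ 2 := by
      rw [norm_mul, Complex.norm_real, mul_pow, Real.norm_eq_abs, sq_abs]
    calc _ ≤ (‖(mult k ξ : ℂ) * a‖ + ‖∑ i ∈ Finset.range L,
          ((mult k (ξ - i - 1) - mult k (ξ - i) : ℝ) : ℂ) * b i‖) ^ 2 := by
          gcongr; exact norm_add_le _ _
      _ ≤ 2 * (‖(mult k ξ : ℂ) * a‖ ^ 2 + ‖∑ i ∈ Finset.range L,
          ((mult k (ξ - i - 1) - mult k (ξ - i) : ℝ) : ℂ) * b i‖ ^ 2) := add_sq_le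
      _ ≤ _ := by rw [h2]; linarith
  calc _ ≤ ∑ k ∈ Finset.Ico j N, (2 * (mult k ξ ^ 2 * ‖a‖ ^ 2) +
        2 * L * (16 / 9 ^ k * ∑ i ∈ Finset.range L, ‖b i‖ ^ 2)) :=
        Finset.sum_le_sum fun k _ => hk k
    _ = 2 * ((∑ k ∈ Finset.Ico j N, mult k ξ ^ 2) * ‖a‖ ^ 2) +
        2 * L * ((∑ k ∈ Finset.Ico j N, 16 / 9 ^ k) * ∑ i ∈ Finset.range L, ‖b i‖ ^ 2) := by
        rw [Finset.sum_add_distrib, ← Finset.mul_sum, ← Finset.mul_sum, Finset.sum_mul,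
          Finset.sum_mul]
    _ ≤ 2 * (2 * ‖a‖ ^ 2) + 2 * L * (18 / 9 ^ j * ∑ i ∈ Finset.range L, ‖b i‖ ^ 2) := by
        gcongr
        · exact sum_mult_sq_le _ _
        · exact sum_inv_nine_le j N
    _ = _ := by ring

/-! ### Dirichlet kernels and localisation -/

/-- The one-sided Dirichlet kernel `∑_{l < n} e(l u)`. -/
noncomputable def dir (n : ℕ) (u : Circ) : ℂ := ∑ l ∈ Finset.range n, (fourier (l : ℤ) u : ℂ)

lemma continuous_dir (n : ℕ) : Continuous (dir n) := by unfold dir; fun_prop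

lemma norm_dir_le (n : ℕ) (u : Circ) : ‖dir n u‖ ≤ n := by
  refine (norm_sum_le _ _).trans ?_
  simp only [norm_fourier_apply]; simp

lemma fourier_nat_eq_pow (n : ℕ) (u : Circ) : (fourier (n : ℤ) u : ℂ) = (fourier 1 u : ℂ) ^ n := by
  induction n with
  | zero => simp
  | succ n ih => push_cast; rw [fourier_add, ih, pow_succ]

lemma norm_dir_mul_chord_le (n : ℕ) (u : Circ) : ‖dir n u‖ * chord u ≤ 2 := by
  have : dir n u * (1 - fourier 1 u) = 1 - fourier n u := by
    simp only [dir, fourier_nat_eq_pow]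
    exact geom_sum_mul_neg _ n
  rw [chord, ← norm_mul, this]
  refine (norm_sub_le _ _).trans ?_
  rw [norm_fourier_apply]; norm_num

lemma norm_dir_sq_le {n : ℕ} {L : ℝ} (hL : 0 < L) (h : n ≤ L) (u : Circ) :
    ‖dir n u‖ ^ 2 ≤ 5 * L * bump L u := by
  have h1 := (norm_dir_le n u).trans h
  have h2 := norm_dir_mul_chord_le n u
  have h0 := norm_nonneg (dir n u)
  have hc := chord_nonneg u
  rw [bump, mul_div_assoc', le_div_iff₀ (by positivity)]
  have a : ‖dir n u‖ ^ 2 ≤ L ^ 2 := by gcongr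
  have b : (‖dir n u‖ * chord u) ^ 2 ≤ 2 ^ 2 := by gcongr
  have := mul_le_mul_of_nonneg_left b (sq_nonneg L)
  nlinarith

lemma fourier_sub_apply (k : ℤ) (x y : Circ) :
    (fourier k (x - y) : ℂ) = fourier k x * fourier (-k) y := by
  rw [sub_eq_add_neg, fourier_add_apply]
  congr 1
  simp [fourier_apply]

lemma sum_range_shift_eq_dir (L : ℕ) (x y : Circ) :
    (∑ l ∈ Finset.range L, (fourier (-(l : ℤ)) y : ℂ) • (fourier (l : ℤ) : Tor)) x =
      dir L (x - y) := by
  simp only [ContinuousMap.coe_sum, Finset.sum_apply, ContinuousMap.smul_apply, smul_eq_mul, dir,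
    fourier_sub_apply, mul_comm]

lemma norm_sum_Ioo_shift (i L : ℕ) (x y : Circ) :
    ‖(∑ l ∈ Finset.Ioo i L, (fourier (-(l : ℤ)) y : ℂ) • (fourier (l : ℤ) : Tor)) x‖ =
      ‖dir (L - (i + 1)) (x - y)‖ := by
  have : (∑ l ∈ Finset.Ioo i L, (fourier (-(l : ℤ)) y : ℂ) • (fourier (l : ℤ) : Tor)) x =
      fourier ((i + 1 : ℕ) : ℤ) (x - y) * dir (L - (i + 1)) (x - y) := by
    have e : Finset.Ioo i L = Finset.Ico (i + 1) L := by
      ext; simp only [Finset.mem_Ioo, Finset.mem_Ico]; omega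
    rw [e, Finset.sum_Ico_eq_sum_range]
    simp only [ContinuousMap.coe_sum, Finset.sum_apply, ContinuousMap.smul_apply, smul_eq_mul, dir]
    rw [Finset.mul_sum]
    refine Finset.sum_congr rfl fun l _ => ?_
    rw [← fourier_add, fourier_sub_apply]
    push_cast
    ring
  rw [this, norm_mul, norm_fourier_apply, one_mul]

/-- The tail of the square function tested against a squared Dirichlet kernel. -/
lemma local_dir (m j N L : ℕ) (hm : 1 ≤ m) (hL : L ≤ 6 * m * 3 ^ j) (f : Tor) (y : Circ) :
    ∫ x, (∑ k ∈ Finset.Ico j N, ‖smoothBlock k f x‖ ^ 2) * ‖dir L (x - y)‖ ^ 2 ∂mu ≤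
      (20 + 6480 * m ^ 2) * (6 * m * 3 ^ j) *
        ∫ x, ‖f x‖ ^ 2 * bump (6 * m * 3 ^ j) (x - y) ∂mu := by
  have hm' : (1 : ℝ) ≤ m := by exact_mod_cast hm
  set Λ : ℝ := 6 * m * 3 ^ j with hΛ
  have hΛ0 : 0 < Λ := by positivity
  have hLΛ : (L : ℝ) ≤ Λ := by rw [hΛ]; exact_mod_cast hL
  have hcb : Continuous fun x => bump Λ (x - y) :=
    (continuous_bump Λ).comp (continuous_id.sub continuous_const)
  have hcd : ∀ n, Continuous fun x => dir n (x - y) := fun n =>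
    (continuous_dir n).comp (continuous_id.sub continuous_const)
  set I := ∫ x, ‖f x‖ ^ 2 * bump Λ (x - y) ∂mu with hI
  have hI0 : 0 ≤ I := integral_nonneg fun x => by
    have := bump_nonneg hΛ0.le (x - y); positivity
  have hdir : ∀ n : ℕ, (n : ℝ) ≤ Λ →
      ∫ x, ‖dir n (x - y)‖ ^ 2 * ‖f x‖ ^ 2 ∂mu ≤ 5 * Λ * I := by
    intro n hn
    rw [hI, ← integral_const_mul]
    refine integral_mono (cint ?_) (cint ?_) fun x => ?_
    · have := hcd n; fun_prop
    · fun_prop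
    · have := norm_dir_sq_le hΛ0 hn (x - y)
      calc _ ≤ 5 * Λ * bump Λ (x - y) * ‖f x‖ ^ 2 := by gcongr
        _ = _ := by ring
  have key := local_square j N L (fun l => (fourier (-(l : ℤ)) y : ℂ)) f
  simp only [ContinuousMap.mul_apply, norm_mul, sum_range_shift_eq_dir, norm_sum_Ioo_shift,
    mul_pow] at key
  calc ∫ x, (∑ k ∈ Finset.Ico j N, ‖smoothBlock k f x‖ ^ 2) * ‖dir L (x - y)‖ ^ 2 ∂mu
      = ∑ k ∈ Finset.Ico j N, ∫ x, ‖dir L (x - y)‖ ^ 2 * ‖smoothBlock k f x‖ ^ 2 ∂mu := by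
        rw [← integral_finsetSum _ fun k _ => cint (by have := hcd L; fun_prop)]
        congr 1; ext x
        rw [Finset.sum_mul]
        exact Finset.sum_congr rfl fun k _ => mul_comm _ _
    _ ≤ _ := key
    _ ≤ 4 * (5 * Λ * I) + 36 * L / 9 ^ j * ∑ i ∈ Finset.range L, 5 * Λ * I := by
        gcongr with i hi
        · exact hdir L hLΛ
        · refine hdir _ (le_trans ?_ hLΛ)
          exact_mod_cast Nat.sub_le _ _
    _ = (20 + 180 * (L ^ 2 / 9 ^ j)) * Λ * I := by
        rw [Finset.sum_const, Finset.card_range, nsmul_eq_mul]; ring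
    _ ≤ _ := by
        have : (L : ℝ) ^ 2 / 9 ^ j ≤ 36 * m ^ 2 := by
          rw [div_le_iff₀ (by positivity)]
          calc (L : ℝ) ^ 2 ≤ Λ ^ 2 := by gcongr
            _ = _ := by rw [hΛ, mul_pow, ← pow_mul, mul_comm j 2, pow_mul]; norm_num; ring
        have h' : 20 + 180 * ((L : ℝ) ^ 2 / 9 ^ j) ≤ 20 + 6480 * m ^ 2 := by linarith
        gcongr

/-- Pointwise domination of a trigonometric polynomial of degree at most `M` by its average against
a sum of squared Dirichlet kernels (from the de la Vallée Poussin reproducing formula). -/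
lemma norm_le_reproducing {M : ℕ} (hM : 1 ≤ M) {B : Tor} (hB : B ∈ Sp (Icc (-(M : ℤ)) M))
    (x : Circ) :
    ‖B x‖ ≤ ∫ y, ‖B y‖ * ((‖dir M (x - y)‖ ^ 2 + ‖dir (3 * M) (x - y)‖ ^ 2) / (2 * M)) ∂mu := by
  have hM0 : (M : ℂ) ≠ 0 := by exact_mod_cast (by omega : M ≠ 0)
  have hcd : ∀ n, Continuous fun y => dir n (x - y) := fun n =>
    (continuous_dir n).comp (continuous_const.sub continuous_id)
  have hc1 := hcd M
  have hc2 := hcd (3 * M)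
  have hcV : Continuous fun y : Circ => conj (dir M (x - y)) * (fourier (-(M : ℤ)) (x - y) : ℂ) *
      dir (3 * M) (x - y) :=
    ((RCLike.continuous_conj.comp hc1).mul (by fun_prop)).mul hc2
  have rep : ∫ y, B y * (conj (dir M (x - y)) * (fourier (-(M : ℤ)) (x - y) : ℂ) *
      dir (3 * M) (x - y)) ∂mu = M * B x := by
    induction hB using Submodule.span_induction with
    | mem b hb =>
      obtain ⟨k, hk, rfl⟩ := hb
      have e : ∀ y, (fourier k y : ℂ) * (conj (dir M (x - y)) * (fourier (-(M : ℤ)) (x - y) : ℂ) *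
          dir (3 * M) (x - y)) = ∑ i ∈ Finset.range M, ∑ l ∈ Finset.range (3 * M),
            (fourier (l - M - i : ℤ) x : ℂ) * fourier (k - (l - M - i) : ℤ) y := by
        intro y
        have e1 : ∀ i l : ℕ, (fourier (l - M - i : ℤ) x : ℂ) * fourier (k - (l - M - i) : ℤ) y =
            fourier k y * ((fourier (-(i : ℤ)) (x - y) : ℂ) * fourier (-(M : ℤ)) (x - y) *
              fourier (l : ℤ) (x - y)) := by
          intro i l
          rw [← fourier_add, ← fourier_add, fourier_sub_apply, mul_left_comm, ← fourier_add]
          congr 2 <;> congr 1 <;> ring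
        simp only [e1, dir, map_sum, ← fourier_neg]
        simp only [← Finset.mul_sum, Finset.sum_mul]
      simp only [e]
      rw [integral_finsetSum _ fun i _ => cint (by fun_prop)]
      have e2 : ∀ i ∈ Finset.range M, ∫ y, ∑ l ∈ Finset.range (3 * M),
          (fourier (l - M - i : ℤ) x : ℂ) * fourier (k - (l - M - i) : ℤ) y ∂mu = fourier k x := by
        intro i hi
        rw [integral_finsetSum _ fun l _ => cint (by fun_prop)]
        simp only [integral_const_mul, integral_fourier_eq]
        have hi' := Finset.mem_range.1 hi
        have hk' := mem_Icc.1 hk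
        rw [Finset.sum_eq_single (k + M + i).toNat]
        · have : (((k + M + i).toNat : ℤ)) = k + M + i := Int.toNat_of_nonneg (by omega)
          rw [this]
          simp [show k + (M : ℤ) + i - M - i = k by ring]
        · intro l hl hne
          rw [if_neg (by omega), mul_zero]
        · intro h
          exact absurd (Finset.mem_range.2 (by omega)) h
      rw [Finset.sum_congr rfl e2]
      simp
    | zero => simp
    | add a b _ _ ha hb =>
      simp only [ContinuousMap.add_apply, add_mul, mul_add]
      have := integral_add (cint (a.continuous.mul hcV)) (cint (b.continuous.mul hcV))
      simp only [Pi.mul_apply] at this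
      rw [this, ha, hb]
    | smul c a _ ha =>
      simp only [ContinuousMap.smul_apply, smul_eq_mul, mul_assoc]
      rw [integral_const_mul]
      simp only [mul_assoc] at ha
      rw [ha]; ring
  have hMr : (0 : ℝ) < M := by exact_mod_cast hM
  have h1 : ‖B x‖ = ‖∫ y, B y * (conj (dir M (x - y)) * (fourier (-(M : ℤ)) (x - y) : ℂ) *
      dir (3 * M) (x - y)) ∂mu‖ / M := by
    rw [rep, norm_mul]; simp; field_simp
  rw [h1, div_le_iff₀ hMr, ← integral_mul_const]
  refine (norm_integral_le_integral_norm _).trans (integral_mono (cint ?_) (cint ?_) fun y => ?_)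
  · exact (B.continuous.mul hcV).norm
  · fun_prop
  · simp only [norm_mul, RCLike.norm_conj, norm_fourier_apply, mul_one]
    have h2 := two_mul_le_add_sq ‖dir M (x - y)‖ ‖dir (3 * M) (x - y)‖
    have h3 : ‖dir M (x - y)‖ * ‖dir (3 * M) (x - y)‖ ≤
        (‖dir M (x - y)‖ ^ 2 + ‖dir (3 * M) (x - y)‖ ^ 2) / (2 * M) * M := by
      rw [show (‖dir M (x - y)‖ ^ 2 + ‖dir (3 * M) (x - y)‖ ^ 2) / (2 * M) * M =
        (‖dir M (x - y)‖ ^ 2 + ‖dir (3 * M) (x - y)‖ ^ 2) / 2 by field_simp]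
      linarith
    calc _ ≤ ‖B y‖ * ((‖dir M (x - y)‖ ^ 2 + ‖dir (3 * M) (x - y)‖ ^ 2) / (2 * M) * M) := by
          gcongr
      _ = _ := by ring

/-! ### Pairing with tails and Abel summation -/

/-- The kernel at frequency scale `6 m 3^j`. -/
noncomputable def kern (m j : ℕ) (x y : Circ) : ℝ≥0∞ :=
  ENNReal.ofReal (bump (6 * m * 3 ^ j) (x - y))

lemma kernelFamily_kern {m : ℕ} (hm : 1 ≤ m) : KernelFamily mu (kern m) 32 := by
  have hm' : (1 : ℝ) ≤ m := by exact_mod_cast hm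
  refine kernelFamily_bump (Λ := fun j => 6 * m * 3 ^ j) (fun j => ?_) fun i j hij => ?_
  · have : (1 : ℝ) ≤ 3 ^ j := one_le_pow₀ (by norm_num)
    nlinarith
  · have : (3 : ℝ) ^ i ≤ 3 ^ j := pow_le_pow_right₀ (by norm_num) hij
    dsimp only
    gcongr

/-- Pairing a polynomial at scale `3^j` with the tail of the square function from scale `3^j` on. The
polynomial is replaced by its averages over Dirichlet kernels, which moves the localisation onto the
tail, where `local_dir` applies. -/
lemma pair_le (m j N : ℕ) (hm : 1 ≤ m) (f : Tor) {B : Tor}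
    (hB : B ∈ Sp (Icc (-((2 * m * 3 ^ j : ℕ) : ℤ)) (2 * m * 3 ^ j : ℕ))) :
    ∫⁻ x, ENNReal.ofReal ‖B x‖ *
        ENNReal.ofReal (∑ k ∈ Finset.Ico j N, ‖smoothBlock k f x‖ ^ 2) ∂mu ≤
      ENNReal.ofReal (3 * (20 + 6480 * m ^ 2)) *
        ∫⁻ y, ENNReal.ofReal ‖B y‖ *
          kop mu (kern m j) (fun x => ENNReal.ofReal (‖f x‖ ^ 2)) y ∂mu := by
  have hm' : (1 : ℝ) ≤ m := by exact_mod_cast hm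
  set M : ℕ := 2 * m * 3 ^ j with hM
  have hM1 : 1 ≤ M := by
    have : 0 < 2 * m * 3 ^ j := by positivity
    omega
  have hM1' : (0 : ℝ) < M := by exact_mod_cast hM1
  set A : Circ → ℝ := fun x => ∑ k ∈ Finset.Ico j N, ‖smoothBlock k f x‖ ^ 2 with hA
  have hAc : Continuous A := by fun_prop
  have hA0 : ∀ x, 0 ≤ A x := fun x => Finset.sum_nonneg fun _ _ => by positivity
  set w : Circ → ℝ := fun u => (‖dir M u‖ ^ 2 + ‖dir (3 * M) u‖ ^ 2) / (2 * M) with hw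
  have hwc : Continuous w := by
    have h1 := continuous_dir M
    have h2 := continuous_dir (3 * M)
    fun_prop
  have hw0 : ∀ u, 0 ≤ w u := fun u => by positivity
  have hrep : ∀ x, ENNReal.ofReal ‖B x‖ ≤
      ∫⁻ y, ENNReal.ofReal ‖B y‖ * ENNReal.ofReal (w (x - y)) ∂mu := by
    intro x
    refine (ENNReal.ofReal_le_ofReal (norm_le_reproducing hM1 hB x)).trans ?_
    rw [ofReal_integral_eq_lintegral_ofReal (cint (by
        have := hwc.comp (continuous_const.sub continuous_id : Continuous fun y => x - y)
        exact B.continuous.norm.mul this))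
      (ae_of_all _ fun y => mul_nonneg (norm_nonneg _) (hw0 _))]
    refine lintegral_mono fun y => ?_
    rw [← ENNReal.ofReal_mul (norm_nonneg _)]
  have hin : ∀ y, ∫⁻ x, ENNReal.ofReal (w (x - y)) * ENNReal.ofReal (A x) ∂mu ≤
      ENNReal.ofReal (3 * (20 + 6480 * m ^ 2)) *
        kop mu (kern m j) (fun x => ENNReal.ofReal (‖f x‖ ^ 2)) y := by
    intro y
    have hwy : Continuous fun x => w (x - y) := hwc.comp (continuous_id.sub continuous_const)
    have hd : ∀ n, Continuous fun x => dir n (x - y) := fun n =>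
      (continuous_dir n).comp (continuous_id.sub continuous_const)
    have hd1 := hd M
    have hd2 := hd (3 * M)
    have hby : Continuous fun x => bump (6 * m * 3 ^ j) (x - y) :=
      (continuous_bump _).comp (continuous_id.sub continuous_const)
    have hb0 : ∀ u, 0 ≤ bump (6 * m * 3 ^ j) u := bump_nonneg (by positivity)
    have e1 : ∫ x, w (x - y) * A x ∂mu ≤ 3 * (20 + 6480 * m ^ 2) *
        ∫ x, ‖f x‖ ^ 2 * bump (6 * m * 3 ^ j) (x - y) ∂mu := by
      have l1 := local_dir m j N M hm (by rw [hM]; gcongr; omega) f y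
      have l2 := local_dir m j N (3 * M) hm (by rw [hM]; apply le_of_eq; ring) f y
      have : ∫ x, w (x - y) * A x ∂mu = (∫ x, A x * ‖dir M (x - y)‖ ^ 2 ∂mu +
          ∫ x, A x * ‖dir (3 * M) (x - y)‖ ^ 2 ∂mu) / (2 * M) := by
        rw [← integral_add (cint (by fun_prop)) (cint (by fun_prop)), ← integral_div]
        congr 1; ext x
        simp only [hw]; ring
      rw [this, div_le_iff₀ (by positivity)]
      refine (add_le_add l1 l2).trans (le_of_eq ?_)
      rw [hM]; push_cast; ring
    calc ∫⁻ x, ENNReal.ofReal (w (x - y)) * ENNReal.ofReal (A x) ∂mu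
        = ENNReal.ofReal (∫ x, w (x - y) * A x ∂mu) := by
          rw [ofReal_integral_eq_lintegral_ofReal (f := fun x => w (x - y) * A x) (cint (hwy.mul hAc))
            (ae_of_all _ fun x => mul_nonneg (hw0 _) (hA0 _))]
          exact lintegral_congr fun x => (ENNReal.ofReal_mul (hw0 _)).symm
      _ ≤ ENNReal.ofReal (3 * (20 + 6480 * m ^ 2) *
          ∫ x, ‖f x‖ ^ 2 * bump (6 * m * 3 ^ j) (x - y) ∂mu) := ENNReal.ofReal_le_ofReal e1
      _ = _ := by
          rw [ENNReal.ofReal_mul (by positivity),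
            ofReal_integral_eq_lintegral_ofReal (cint (by fun_prop))
            (ae_of_all _ fun x => mul_nonneg (by positivity) (hb0 _))]
          congr 1
          refine lintegral_congr fun x => ?_
          rw [kern, bump_sub_comm, mul_comm, ENNReal.ofReal_mul (hb0 _)]
  have mB : Measurable fun y => ENNReal.ofReal ‖B y‖ := by fun_prop
  have mA : Measurable fun y => ENNReal.ofReal (A y) := hAc.measurable.ennreal_ofReal
  have mw : Measurable fun p : Circ × Circ => ENNReal.ofReal (w (p.1 - p.2)) :=
    (hwc.comp (continuous_fst.sub continuous_snd)).measurable.ennreal_ofReal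
  have mwx : ∀ x, Measurable fun y => ENNReal.ofReal (w (x - y)) := fun x =>
    (hwc.comp (continuous_const.sub continuous_id)).measurable.ennreal_ofReal
  have mwy : ∀ y, Measurable fun x => ENNReal.ofReal (w (x - y)) := fun y =>
    (hwc.comp (continuous_id.sub continuous_const)).measurable.ennreal_ofReal
  calc ∫⁻ x, ENNReal.ofReal ‖B x‖ * ENNReal.ofReal (A x) ∂mu
      ≤ ∫⁻ x, (∫⁻ y, ENNReal.ofReal ‖B y‖ * ENNReal.ofReal (w (x - y)) ∂mu) *
          ENNReal.ofReal (A x) ∂mu := by gcongr with x; exact hrep x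
    _ = ∫⁻ x, ∫⁻ y, ENNReal.ofReal ‖B y‖ * ENNReal.ofReal (w (x - y)) *
          ENNReal.ofReal (A x) ∂mu ∂mu := by
        refine lintegral_congr fun x => ?_
        exact (lintegral_mul_const _ (mB.mul (mwx x))).symm
    _ = ∫⁻ y, ∫⁻ x, ENNReal.ofReal ‖B y‖ * ENNReal.ofReal (w (x - y)) *
          ENNReal.ofReal (A x) ∂mu ∂mu := by
        rw [lintegral_lintegral_swap]
        exact (((mB.comp measurable_snd).mul mw).mul (mA.comp measurable_fst)).aemeasurable
    _ = ∫⁻ y, ENNReal.ofReal ‖B y‖ *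
          ∫⁻ x, ENNReal.ofReal (w (x - y)) * ENNReal.ofReal (A x) ∂mu ∂mu := by
        refine lintegral_congr fun y => ?_
        simp only [mul_assoc]
        exact lintegral_const_mul _ ((mwy y).mul mA)
    _ ≤ ∫⁻ y, ENNReal.ofReal ‖B y‖ * (ENNReal.ofReal (3 * (20 + 6480 * m ^ 2)) *
        kop mu (kern m j) (fun x => ENNReal.ofReal (‖f x‖ ^ 2)) y) ∂mu := by
        gcongr with y; exact hin y
    _ = _ := by
        rw [← lintegral_const_mul' _ _ ENNReal.ofReal_ne_top]
        refine lintegral_congr fun y => ?_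
        ring

lemma pow_succ_sub_le {u v : ℝ} (hu : 0 ≤ u) (huv : u ≤ v) (s : ℕ) :
    v ^ (s + 1) - u ^ (s + 1) ≤ (s + 1) * (v - u) * v ^ s := by
  induction s with
  | zero => simp
  | succ s ih =>
    have hv : 0 ≤ v := hu.trans huv
    have h1 : 0 ≤ v ^ (s + 1) - u ^ (s + 1) := by
      have : u ^ (s + 1) ≤ v ^ (s + 1) := by gcongr
      linarith
    have h2 : u * (v ^ (s + 1) - u ^ (s + 1)) ≤ v * ((s + 1) * (v - u) * v ^ s) :=
      mul_le_mul huv ih h1 hv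
    push_cast
    calc v ^ (s + 1 + 1) - u ^ (s + 1 + 1)
        = (v - u) * v ^ (s + 1) + u * (v ^ (s + 1) - u ^ (s + 1)) := by ring
      _ ≤ (v - u) * v ^ (s + 1) + v * ((s + 1) * (v - u) * v ^ s) := by linarith
      _ = _ := by ring

/-- Discrete form of `∫ s T^{s-1} (T_∞ - T) dT = T_∞^{s+1} / (s+1)`. -/
lemma abel_pow {t : ℕ → ℝ} (ht : Monotone t) (h0 : t 0 = 0) {s : ℕ} (hs : s ≠ 0) (N : ℕ) :
    t N ^ (s + 1) ≤
      (s + 1) * ∑ j ∈ Finset.range N, (t (j + 1) ^ s - t j ^ s) * (t N - t j) := by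
  have hn : ∀ j, 0 ≤ t j := fun j => h0 ▸ ht (Nat.zero_le j)
  induction N with
  | zero => simp [h0]
  | succ N ih =>
    have hb : ∑ j ∈ Finset.range (N + 1), (t (j + 1) ^ s - t j ^ s) = t (N + 1) ^ s := by
      rw [Finset.sum_range_sub (fun j => t j ^ s), h0, zero_pow hs, sub_zero]
    have e : ∑ j ∈ Finset.range (N + 1), (t (j + 1) ^ s - t j ^ s) * (t (N + 1) - t j) =
        ∑ j ∈ Finset.range N, (t (j + 1) ^ s - t j ^ s) * (t N - t j) +
          (t (N + 1) - t N) * t (N + 1) ^ s := by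
      have : ∑ j ∈ Finset.range (N + 1), (t (j + 1) ^ s - t j ^ s) * (t N - t j) =
          ∑ j ∈ Finset.range N, (t (j + 1) ^ s - t j ^ s) * (t N - t j) := by
        rw [Finset.sum_range_succ]; simp
      rw [← this, ← hb, Finset.mul_sum, ← Finset.sum_add_distrib]
      exact Finset.sum_congr rfl fun j _ => by ring
    rw [e, mul_add]
    have := pow_succ_sub_le (hn N) (ht (Nat.le_succ N)) s
    linarith

/-- A Young-type inequality whose first term can be absorbed. -/
lemma absorb {τ c : ℝ≥0∞} (m : ℕ) : τ ^ m * c ≤ τ ^ (m + 1) / 2 + (2 * c) ^ (m + 1) := by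
  rcases le_total c (τ / 2) with h | h
  · calc τ ^ m * c ≤ τ ^ m * (τ / 2) := by gcongr
      _ = τ ^ (m + 1) / 2 := by rw [pow_succ, mul_div_assoc]
      _ ≤ _ := le_self_add
  · have h' : τ ≤ 2 * c := by
      calc τ = 2 * (τ / 2) := (ENNReal.mul_div_cancel (by simp) (by simp)).symm
        _ ≤ _ := by gcongr
    calc τ ^ m * c ≤ (2 * c) ^ m * (2 * c) := by
          gcongr
          exact le_mul_of_one_le_left' (by norm_num)
      _ = (2 * c) ^ (m + 1) := (pow_succ _ _).symm
      _ ≤ _ := le_add_self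

/-- Partial sums of the smooth square function, as a trigonometric polynomial. -/
noncomputable def sqPoly (f : Tor) (j : ℕ) : Tor :=
  ∑ n ∈ Finset.range j, smoothBlock n f * star (smoothBlock n f)

lemma sqPoly_apply (f : Tor) (j : ℕ) (x : Circ) :
    sqPoly f j x = ((∑ n ∈ Finset.range j, ‖smoothBlock n f x‖ ^ 2 : ℝ) : ℂ) := by
  simp only [sqPoly, ContinuousMap.coe_sum, Finset.sum_apply, ContinuousMap.mul_apply,
    ContinuousMap.star_apply, Complex.ofReal_sum]
  refine Finset.sum_congr rfl fun n _ => ?_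
  rw [RCLike.star_def, Complex.mul_conj, Complex.normSq_eq_norm_sq]

lemma sqPoly_mem (f : Tor) {j i : ℕ} (h : j ≤ i + 1) :
    sqPoly f j ∈ Sp (Icc (-(2 * 3 ^ i)) (2 * 3 ^ i)) := by
  refine Submodule.sum_mem _ fun n hn => ?_
  have hni : n ≤ i := by have := Finset.mem_range.1 hn; omega
  have h3 : (3 : ℤ) ^ n ≤ 3 ^ i := pow_le_pow_right₀ (by norm_num) hni
  refine Sp_mul (s := Icc 0 (2 * 3 ^ n)) (t := Icc (-(2 * 3 ^ n)) 0) ?_ (smoothBlock_mem n f)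
    (Sp_star ?_ (smoothBlock_mem n f))
  · rintro a ⟨ha, ha'⟩ b ⟨hb, hb'⟩
    exact ⟨by linarith, by linarith⟩
  · rintro a ⟨ha, ha'⟩
    exact ⟨by linarith, by linarith⟩

lemma Sp_pow {D : ℤ} {g : Tor} (hg : g ∈ Sp (Icc (-D) D)) (s : ℕ) :
    g ^ s ∈ Sp (Icc (-(s * D)) (s * D)) := by
  induction s with
  | zero =>
    have : (1 : Tor) = fourier 0 := by ext x; simp
    rw [pow_zero, this]
    exact fourier_mem_Sp (by simp)
  | succ s ih =>
    rw [pow_succ]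
    refine Sp_mul ?_ ih hg
    rintro a ⟨ha, ha'⟩ b ⟨hb, hb'⟩
    push_cast
    exact ⟨by linarith, by linarith⟩

/-! ### Square functions in high powers -/

/-- The smooth square function is controlled by the maximal function of `|f|²`. With `t j` the partial
sums of the square function, `abel_pow` writes `t N ^ (s + 1)` through the products of
`t (j + 1) ^ s - t j ^ s`, a trigonometric polynomial of degree at most `2 (s + 1) 3^j`, and the tail
`t N - t j`. Each product is estimated by `pair_le`, and the differences telescope to `t N ^ s`. -/
lemma square_le_maxFn (s N : ℕ) (hs : s ≠ 0) (f : Tor) :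
    ∫⁻ x, ENNReal.ofReal (∑ n ∈ Finset.range N, ‖smoothBlock n f x‖ ^ 2) ^ (s + 1) ∂mu ≤
      ENNReal.ofReal ((s + 1) * (3 * (20 + 6480 * (s + 1 : ℕ) ^ 2))) *
        ∫⁻ x, ENNReal.ofReal (∑ n ∈ Finset.range N, ‖smoothBlock n f x‖ ^ 2) ^ s *
          maxFn mu (kern (s + 1)) N (fun x => ENNReal.ofReal (‖f x‖ ^ 2)) x ∂mu := by
  set F : Circ → ℝ≥0∞ := fun x => ENNReal.ofReal (‖f x‖ ^ 2) with hF
  have hFm : Measurable F := by fun_prop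
  have H := kernelFamily_kern (m := s + 1) (by omega)
  set t : Circ → ℕ → ℝ := fun x j => ∑ n ∈ Finset.range j, ‖smoothBlock n f x‖ ^ 2 with ht
  have htm : ∀ x, Monotone (t x) := fun x i j hij =>
    Finset.sum_le_sum_of_subset_of_nonneg (Finset.range_subset_range.2 hij)
      fun _ _ _ => by positivity
  have ht0 : ∀ x, t x 0 = 0 := fun x => by simp [ht]
  have htn : ∀ x j, 0 ≤ t x j := fun x j => Finset.sum_nonneg fun _ _ => by positivity
  have htc : ∀ j, Continuous fun x => t x j := fun j => by fun_prop
  set B : ℕ → Tor := fun j => sqPoly f (j + 1) ^ s - sqPoly f j ^ s with hB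
  have hBx : ∀ j x, ‖B j x‖ = t x (j + 1) ^ s - t x j ^ s := by
    intro j x
    have : B j x = ((t x (j + 1) ^ s - t x j ^ s : ℝ) : ℂ) := by
      simp only [hB, ContinuousMap.sub_apply, ContinuousMap.pow_apply, sqPoly_apply, ht]
      push_cast; rfl
    rw [this, Complex.norm_real, Real.norm_of_nonneg]
    have : t x j ^ s ≤ t x (j + 1) ^ s := pow_le_pow_left₀ (htn _ _) (htm x (Nat.le_succ j)) s
    linarith
  have hBmem : ∀ j, B j ∈ Sp (Icc (-((2 * (s + 1) * 3 ^ j : ℕ) : ℤ))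
      (2 * (s + 1) * 3 ^ j : ℕ)) := by
    intro j
    have h3 : (0 : ℤ) < 3 ^ j := by positivity
    refine Sp_mono ?_ (Submodule.sub_mem _ (Sp_pow (sqPoly_mem f (le_refl (j + 1))) s)
      (Sp_pow (sqPoly_mem f (Nat.le_succ j)) s))
    apply Icc_subset_Icc <;> · push_cast; nlinarith
  have hpt : ∀ x, ENNReal.ofReal (t x N) ^ (s + 1) ≤ ENNReal.ofReal (s + 1) *
      ∑ j ∈ Finset.range N, ENNReal.ofReal ‖B j x‖ *
        ENNReal.ofReal (∑ k ∈ Finset.Ico j N, ‖smoothBlock k f x‖ ^ 2) := by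
    intro x
    have h := abel_pow (htm x) (ht0 x) hs N
    rw [← ENNReal.ofReal_pow (htn x N)]
    refine (ENNReal.ofReal_le_ofReal h).trans (le_of_eq ?_)
    rw [ENNReal.ofReal_mul (by positivity), ENNReal.ofReal_sum_of_nonneg]
    · congr 1
      refine Finset.sum_congr rfl fun j hj => ?_
      rw [← hBx, ENNReal.ofReal_mul (norm_nonneg _), Finset.sum_Ico_eq_sub _
        (Finset.mem_range.1 hj).le]
    · intro j hj
      rw [← hBx]
      have := htm x (Finset.mem_range.1 hj).le
      exact mul_nonneg (norm_nonneg _) (by linarith)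
  have hsum : ∀ x, ∑ j ∈ Finset.range N, ENNReal.ofReal ‖B j x‖ = ENNReal.ofReal (t x N) ^ s := by
    intro x
    rw [← ENNReal.ofReal_sum_of_nonneg fun _ _ => norm_nonneg _]
    simp only [hBx]
    rw [Finset.sum_range_sub (fun j => t x j ^ s), ht0, zero_pow hs, sub_zero,
      ENNReal.ofReal_pow (htn x N)]
  have mB : ∀ j, Measurable fun x => ENNReal.ofReal ‖B j x‖ := fun j => by fun_prop
  set K : ℝ≥0∞ := ENNReal.ofReal (3 * (20 + 6480 * (s + 1 : ℕ) ^ 2)) with hK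
  calc ∫⁻ x, ENNReal.ofReal (t x N) ^ (s + 1) ∂mu
      ≤ ∫⁻ x, ENNReal.ofReal (s + 1) * ∑ j ∈ Finset.range N, ENNReal.ofReal ‖B j x‖ *
        ENNReal.ofReal (∑ k ∈ Finset.Ico j N, ‖smoothBlock k f x‖ ^ 2) ∂mu := lintegral_mono hpt
    _ = ENNReal.ofReal (s + 1) * ∑ j ∈ Finset.range N, ∫⁻ x, ENNReal.ofReal ‖B j x‖ *
        ENNReal.ofReal (∑ k ∈ Finset.Ico j N, ‖smoothBlock k f x‖ ^ 2) ∂mu := by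
        rw [lintegral_const_mul' _ _ ENNReal.ofReal_ne_top, lintegral_finsetSum]
        intro j _
        have : Continuous fun x => ∑ k ∈ Finset.Ico j N, ‖smoothBlock k f x‖ ^ 2 := by fun_prop
        exact (mB j).mul this.measurable.ennreal_ofReal
    _ ≤ ENNReal.ofReal (s + 1) * ∑ j ∈ Finset.range N,
        K * ∫⁻ x, ENNReal.ofReal ‖B j x‖ * maxFn mu (kern (s + 1)) N F x ∂mu := by
        gcongr with j hj
        refine (pair_le (s + 1) j N (by omega) f (hBmem j)).trans ?_
        gcongr with x
        exact Finset.le_sup (f := fun j => kop mu (kern (s + 1) j) F x) hj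
    _ = ENNReal.ofReal (s + 1) * (K *
        ∫⁻ x, ∑ j ∈ Finset.range N, ENNReal.ofReal ‖B j x‖ * maxFn mu (kern (s + 1)) N F x ∂mu) := by
        rw [← Finset.mul_sum, lintegral_finsetSum]
        intro j _
        exact (mB j).mul (H.meas_maxFn N hFm)
    _ = _ := by
        rw [← mul_assoc, hK, ← ENNReal.ofReal_mul (by positivity)]
        congr 1
        refine lintegral_congr fun x => ?_
        rw [← Finset.sum_mul, hsum]

/-- The Littlewood–Paley inequality for the smooth square function, in `L^{2^{a+2}}`. -/
lemma smooth_square (a : ℕ) : ∃ C : ℝ≥0∞, C ≠ ∞ ∧ ∀ (N : ℕ) (f : Tor),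
    ∫⁻ x, ENNReal.ofReal (∑ n ∈ Finset.range N, ‖smoothBlock n f x‖ ^ 2) ^ 2 ^ (a + 1) ∂mu ≤
      C * ∫⁻ x, ENNReal.ofReal (‖f x‖ ^ 2) ^ 2 ^ (a + 1) ∂mu := by
  obtain ⟨s, hs⟩ : ∃ s, 2 ^ (a + 1) = s + 1 :=
    ⟨2 ^ (a + 1) - 1, by have := Nat.one_le_two_pow (n := a + 1); omega⟩
  have hs0 : s ≠ 0 := by
    rintro rfl
    have := Nat.one_le_two_pow (n := a)
    rw [pow_succ] at hs; omega
  set c : ℝ≥0∞ := ENNReal.ofReal ((s + 1) * (3 * (20 + 6480 * (s + 1 : ℕ) ^ 2))) with hc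
  refine ⟨2 * ((2 * c) ^ (s + 1) * (((32 : ℝ≥0∞) ^ (2 ^ a - 1)) ^ 2 * (2 * 32) ^ 2)), ?_, ?_⟩
  · refine ENNReal.mul_ne_top (by simp) (ENNReal.mul_ne_top (ENNReal.pow_ne_top
      (ENNReal.mul_ne_top (by simp) ENNReal.ofReal_ne_top)) (ENNReal.mul_ne_top ?_ ?_))
    · exact ENNReal.pow_ne_top (ENNReal.pow_ne_top (by simp))
    · exact ENNReal.pow_ne_top (ENNReal.mul_ne_top (by simp) (by simp))
  intro N f
  have H := kernelFamily_kern (m := s + 1) (by omega)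
  have h1 := square_le_maxFn s N hs0 f
  set F : Circ → ℝ≥0∞ := fun x => ENNReal.ofReal (‖f x‖ ^ 2) with hF
  have hFm : Measurable F := by fun_prop
  have hFR : ∀ x, F x ≤ ENNReal.ofReal (‖f‖ ^ 2) := fun x =>
    ENNReal.ofReal_le_ofReal (by have := f.norm_coe_le_norm x; gcongr)
  have h2 := H.maximal_pow (by simp) a N hFm ENNReal.ofReal_ne_top hFR
  rw [hs] at h2 ⊢
  set U := maxFn mu (kern (s + 1)) N F with hU
  have hUm : Measurable U := H.meas_maxFn N hFm
  set τ : Circ → ℝ≥0∞ := fun x =>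
    ENNReal.ofReal (∑ n ∈ Finset.range N, ‖smoothBlock n f x‖ ^ 2) with hτ
  have hτc : Continuous fun x => ∑ n ∈ Finset.range N, ‖smoothBlock n f x‖ ^ 2 := by fun_prop
  have hτm : Measurable τ := hτc.measurable.ennreal_ofReal
  set I := ∫⁻ x, τ x ^ (s + 1) ∂mu with hI
  have hfin : I ≠ ∞ := by
    have : I = ENNReal.ofReal
        (∫ x, (∑ n ∈ Finset.range N, ‖smoothBlock n f x‖ ^ 2) ^ (s + 1) ∂mu) := by
      rw [ofReal_integral_eq_lintegral_ofReal (cint (by fun_prop)) (ae_of_all _ fun x => by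
        positivity)]
      exact lintegral_congr fun x => (ENNReal.ofReal_pow (by positivity) _).symm
    rw [this]; exact ENNReal.ofReal_ne_top
  have h3 : I ≤ I / 2 + ∫⁻ x, (2 * (c * U x)) ^ (s + 1) ∂mu := by
    calc I ≤ c * ∫⁻ x, τ x ^ s * U x ∂mu := h1
      _ = ∫⁻ x, τ x ^ s * (c * U x) ∂mu := by
          rw [← lintegral_const_mul' _ _ ENNReal.ofReal_ne_top]
          exact lintegral_congr fun x => by ring
      _ ≤ ∫⁻ x, (τ x ^ (s + 1) / 2 + (2 * (c * U x)) ^ (s + 1)) ∂mu :=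
          lintegral_mono fun x => absorb s
      _ = _ := by
          rw [lintegral_add_left ((hτm.pow_const _).div_const _)]
          simp only [div_eq_mul_inv]
          rw [lintegral_mul_const _ (hτm.pow_const _)]
  have h4 : I / 2 ≤ ∫⁻ x, (2 * (c * U x)) ^ (s + 1) ∂mu := by
    have hh : I / 2 ≠ ∞ := ENNReal.div_ne_top hfin (by simp)
    rw [← ENNReal.add_le_add_iff_left hh, ENNReal.add_halves]
    exact h3
  calc I = 2 * (I / 2) := (ENNReal.mul_div_cancel (by simp) (by simp)).symm
    _ ≤ 2 * ∫⁻ x, (2 * (c * U x)) ^ (s + 1) ∂mu := by gcongr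
    _ = 2 * ((2 * c) ^ (s + 1) * ∫⁻ x, U x ^ (s + 1) ∂mu) := by
        simp only [← mul_assoc (2 : ℝ≥0∞) c, mul_pow (2 * c)]
        rw [lintegral_const_mul _ (hUm.pow_const _)]
    _ ≤ 2 * ((2 * c) ^ (s + 1) * (((32 : ℝ≥0∞) ^ (2 ^ a - 1)) ^ 2 * (2 * 32) ^ 2 *
        ∫⁻ x, F x ^ (s + 1) ∂mu)) := by gcongr
    _ = _ := by ring

/-- The sharp lacunary projection onto the frequencies in `(3^n/2, 3^n]`. -/
noncomputable def sharpBlock (n : ℕ) (f : Tor) : Tor :=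
  ∑ ξ ∈ (Finset.Icc (0 : ℤ) (2 * 3 ^ n)).filter (fun ξ => 3 ^ n < 2 * ξ ∧ ξ ≤ 3 ^ n),
    cf ξ f • (fourier ξ : Tor)

lemma cf_sharpBlock (n : ℕ) (f : Tor) (η : ℤ) :
    cf η (sharpBlock n f) = if 3 ^ n < 2 * η ∧ η ≤ 3 ^ n then cf η f else 0 := by
  unfold sharpBlock
  simp only [map_sum, map_smul, cf_fourier, smul_eq_mul, mul_ite, mul_one, mul_zero]
  rw [Finset.sum_ite_eq']
  have h3 : (0 : ℤ) < 3 ^ n := by positivity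
  refine if_congr ?_ rfl rfl
  simp only [Finset.mem_filter, Finset.mem_Icc]
  constructor
  · exact fun h => h.2
  · exact fun h => ⟨⟨by omega, by omega⟩, h⟩

/-- Bessel's inequality for the lacunary square function. The constant `2` comes from dominating the
sharp blocks by the smooth multipliers. -/
lemma sharp_square_two (N : ℕ) (f : Tor) :
    ∫ x, ∑ n ∈ Finset.range N, ‖sharpBlock n f x‖ ^ 2 ∂mu ≤ 2 * ∫ x, ‖f x‖ ^ 2 ∂mu := by
  rw [integral_finsetSum _ fun n _ => cint (by fun_prop)]
  refine hasSum_le (fun ξ => ?_) (hasSum_sum (s := Finset.range N) fun n _ =>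
    hasSum_sq_cf (sharpBlock n f)) ((hasSum_sq_cf f).mul_left 2)
  calc ∑ n ∈ Finset.range N, ‖cf ξ (sharpBlock n f)‖ ^ 2
      ≤ ∑ n ∈ Finset.range N, mult n ξ ^ 2 * ‖cf ξ f‖ ^ 2 := by
        refine Finset.sum_le_sum fun n _ => ?_
        rw [cf_sharpBlock]
        split_ifs with h
        · rw [mult_eq_one h.1 h.2]; simp
        · simp; positivity
    _ ≤ _ := by
        rw [← Finset.sum_mul]
        gcongr
        exact sum_mult_sq_le _ _

/-- The Littlewood–Paley inequality for the sharp lacunary square function, in `L^{2^{a+2}}`. -/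
lemma sharp_square (a : ℕ) : ∃ C : ℝ, 0 ≤ C ∧ ∀ (N : ℕ) (f : Tor),
    ∫ x, (∑ n ∈ Finset.range N, ‖sharpBlock n f x‖ ^ 2) ^ 2 ^ (a + 1) ∂mu ≤
      C * ∫ x, (‖f x‖ ^ 2) ^ 2 ^ (a + 1) ∂mu := by
  obtain ⟨C₁, hC₁, h₁⟩ := exists_bandBound (a + 1)
  obtain ⟨C₂, hC₂, h₂⟩ := smooth_square a
  refine ⟨C₁ * C₂.toReal, by positivity, fun N f => ?_⟩
  have hs : ∫ x, (∑ n ∈ Finset.range N, ‖smoothBlock n f x‖ ^ 2) ^ 2 ^ (a + 1) ∂mu ≤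
      C₂.toReal * ∫ x, (‖f x‖ ^ 2) ^ 2 ^ (a + 1) ∂mu := by
    have h := h₂ N f
    have e : ∀ g : Circ → ℝ, Continuous g → (∀ x, 0 ≤ g x) →
        ∫⁻ x, ENNReal.ofReal (g x) ^ 2 ^ (a + 1) ∂mu =
          ENNReal.ofReal (∫ x, g x ^ 2 ^ (a + 1) ∂mu) := fun g hg h0 => by
      rw [ofReal_integral_eq_lintegral_ofReal (cint (by fun_prop)) (ae_of_all _ fun x =>
        pow_nonneg (h0 x) _)]
      exact lintegral_congr fun x => (ENNReal.ofReal_pow (h0 x) _).symm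
    rw [e _ (by fun_prop) (fun x => by positivity), e _ (by fun_prop) (fun x => by positivity),
      ← ENNReal.ofReal_toReal hC₂, ← ENNReal.ofReal_mul ENNReal.toReal_nonneg] at h
    refine (ENNReal.ofReal_le_ofReal_iff ?_).1 h
    exact mul_nonneg ENNReal.toReal_nonneg (integral_nonneg fun x => by positivity)
  -- the smooth block splits into `l`, the sharp block, and `h`, with frequencies below, in and above
  -- the band `(3^n/2, 3^n]`, on which the multiplier is `1`
  set P : ℕ → ℤ → Tor := fun n ξ => ((mult n ξ : ℂ) * cf ξ f) • (fourier ξ : Tor) with hP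
  set s : ℕ → Finset ℤ := fun n => Finset.Icc (0 : ℤ) (2 * 3 ^ n) with hsdef
  set l : ℕ → Tor := fun n => ∑ ξ ∈ (s n).filter (fun ξ => 2 * ξ ≤ 3 ^ n), P n ξ with hl
  set h : ℕ → Tor := fun n => ∑ ξ ∈ (s n).filter (fun ξ => 3 ^ n < ξ), P n ξ with hh
  have hlm : ∀ n, l n ∈ Sp (Iic (3 ^ n / 2 : ℤ)) := fun n =>
    Submodule.sum_mem _ fun ξ hξ => Submodule.smul_mem _ _ (fourier_mem_Sp (by
      have := (Finset.mem_filter.1 hξ).2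
      simp only [mem_Iic]; omega))
  have hdm : ∀ n, sharpBlock n f ∈ Sp (Ioc (3 ^ n / 2 : ℤ) (3 ^ n)) := fun n =>
    Submodule.sum_mem _ fun ξ hξ => Submodule.smul_mem _ _ (fourier_mem_Sp (by
      have := (Finset.mem_filter.1 hξ).2
      simp only [mem_Ioc]; omega))
  have hhm : ∀ n, h n ∈ Sp (Ioi (3 ^ n / 2 : ℤ) ∩ Ioi (3 ^ n)) := fun n =>
    Submodule.sum_mem _ fun ξ hξ => Submodule.smul_mem _ _ (fourier_mem_Sp (by
      have := (Finset.mem_filter.1 hξ).2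
      have h3 : (0 : ℤ) < 3 ^ n := by positivity
      simp only [mem_inter_iff, mem_Ioi]; omega))
  have hdec : ∀ n, l n + sharpBlock n f + h n = smoothBlock n f := by
    intro n
    have e1 : sharpBlock n f =
        ∑ ξ ∈ (s n).filter (fun ξ => 3 ^ n < 2 * ξ ∧ ξ ≤ 3 ^ n), P n ξ := by
      refine Finset.sum_congr rfl fun ξ hξ => ?_
      have := (Finset.mem_filter.1 hξ).2
      simp only [hP]
      rw [mult_eq_one this.1 this.2]; simp
    rw [e1, hl, hh, smoothBlock]
    simp only [Finset.sum_filter]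
    rw [← Finset.sum_add_distrib, ← Finset.sum_add_distrib]
    refine Finset.sum_congr rfl fun ξ _ => ?_
    have h3 : (0 : ℤ) < 3 ^ n := by positivity
    rcases lt_trichotomy (3 ^ n : ℤ) ξ with h | h | h
    · rw [if_neg (by omega), if_neg (by omega), if_pos h]; simp [hP]
    · rw [if_neg (by omega), if_pos (by omega), if_neg (by omega)]; simp [hP]
    · by_cases h' : 2 * ξ ≤ 3 ^ n
      · rw [if_pos h', if_neg (by omega), if_neg (by omega)]; simp [hP]
      · rw [if_neg h', if_pos (by omega), if_neg (by omega)]; simp [hP]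
  have hb := h₁ N _ _ l (fun n => sharpBlock n f) h hlm hdm hhm
  have e : ∀ n x, l n x + sharpBlock n f x + h n x = smoothBlock n f x := fun n x => by
    rw [← hdec n]; rfl
  simp only [e] at hb
  calc _ ≤ _ := hb
    _ ≤ C₁ * (C₂.toReal * ∫ x, (‖f x‖ ^ 2) ^ 2 ^ (a + 1) ∂mu) := by gcongr
    _ = _ := by ring

/-! ### Interpolation -/

/-- Layer cake formula, used as an upper bound: a pointwise bound `G` for the density
`t ↦ μ{h > t} t^m` bounds the `(m+1)`-st moment of `h`. -/
lemma moment_le_of_distribution_le {h : Circ → ℝ} (hc : Continuous h) (h0 : ∀ x, 0 ≤ h x)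
    (m : ℕ) {G : ℝ → ℝ} (hG : IntegrableOn G (Ioi 0)) (hG0 : ∀ t > 0, 0 ≤ G t)
    (hd : ∀ t > 0, mu.real {x | t < h x} * t ^ m ≤ G t) :
    ∫ x, h x ^ (m + 1) ∂mu ≤ (m + 1) * ∫ t in Ioi 0, G t := by
  have hGn : 0 ≤ ∫ t in Ioi 0, G t := setIntegral_nonneg measurableSet_Ioi fun t ht => hG0 t ht
  refine (ENNReal.ofReal_le_ofReal_iff (by positivity)).1 ?_
  rw [ofReal_integral_eq_lintegral_ofReal (cint (by fun_prop)) (ae_of_all _ fun x =>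
    pow_nonneg (h0 x) _)]
  have e := lintegral_rpow_eq_lintegral_meas_lt_mul mu (ae_of_all _ h0)
    hc.measurable.aemeasurable (p := (m + 1 : ℕ)) (by positivity)
  simp only [Real.rpow_natCast] at e
  have hGae : 0 ≤ᵐ[volume.restrict (Ioi (0 : ℝ))] G :=
    ae_restrict_of_forall_mem measurableSet_Ioi hG0
  rw [e, ENNReal.ofReal_mul (by positivity), ofReal_integral_eq_lintegral_ofReal hG hGae]
  push_cast
  refine mul_le_mul' le_rfl (setLIntegral_mono' measurableSet_Ioi fun t ht => ?_)
  rw [add_sub_cancel_right, Real.rpow_natCast, ← ofReal_measureReal,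
    ← ENNReal.ofReal_mul measureReal_nonneg]
  exact ENNReal.ofReal_le_ofReal (hd t ht)

/-- The part of `g` above height `s` has a finite second moment if the distribution function of
`g` decays beyond `s` faster than `t⁻²`. -/
lemma upper_moment {g : Circ → ℝ} (hc : Continuous g) {M s p : ℝ} (hM : 0 ≤ M) (hs : 0 < s)
    (hp : 2 < p) (hd : ∀ t ≥ s, mu.real {x | t < g x} ≤ M * (s ^ p * t ^ (-p))) :
    ∫ x, (max (g x - s) 0) ^ 2 ∂mu ≤ 2 * (1 + 1 / (p - 2)) * M * s ^ 2 := by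
  have hsp : s ^ p * s ^ (-p) = 1 := by rw [← Real.rpow_add hs]; simp
  have hi1 : IntegrableOn ((Ioc 0 s).indicator fun _ => M * s) (Ioi 0) :=
    ((integrableOn_const (by simp)).integrable_indicator measurableSet_Ioc).integrableOn
  have hi0 : IntegrableOn (fun t : ℝ => M * s ^ p * t ^ (1 - p)) (Ioi s) :=
    (integrableOn_Ioi_rpow_of_lt (by linarith) hs).const_mul _
  have hi2 : IntegrableOn ((Ioi s).indicator fun t => M * s ^ p * t ^ (1 - p)) (Ioi 0) :=
    (hi0.integrable_indicator measurableSet_Ioi).integrableOn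
  have h := moment_le_of_distribution_le (h := fun x => max (g x - s) 0) (by fun_prop)
    (fun x => le_max_right _ _) 1 (hi1.add hi2) (fun t ht => by
      refine add_nonneg (indicator_nonneg (fun t _ => by positivity) _)
        (indicator_nonneg (fun t ht' => ?_) _)
      have : 0 < t := hs.trans ht'
      positivity) (fun t ht => ?_)
  · refine h.trans (le_of_eq ?_)
    rw [show (fun t => ((Ioc 0 s).indicator (fun _ => M * s) +
      (Ioi s).indicator fun t => M * s ^ p * t ^ (1 - p)) t) = fun t =>
      (Ioc 0 s).indicator (fun _ => M * s) t +
      (Ioi s).indicator (fun t => M * s ^ p * t ^ (1 - p)) t from rfl]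
    rw [integral_add hi1 hi2, setIntegral_indicator measurableSet_Ioc,
      setIntegral_indicator measurableSet_Ioi, inter_eq_right.2 (fun t ht => ht.1),
      inter_eq_right.2 (Ioi_subset_Ioi hs.le), integral_const_mul (M * s ^ p),
      integral_Ioi_rpow_of_lt (by linarith) hs]
    have e : s ^ (1 - p + 1) = s ^ (-p) * s ^ 2 := by
      rw [← Real.rpow_natCast, ← Real.rpow_add hs]; congr 1; push_cast; ring
    rw [e]
    have e2 : M * s ^ p * (-(s ^ (-p) * s ^ 2) / (1 - p + 1)) = M * s ^ 2 / (p - 2) := by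
      have : 1 - p + 1 ≠ 0 := by linarith
      have : p - 2 ≠ 0 := by linarith
      calc _ = M * (s ^ p * s ^ (-p)) * (-s ^ 2 / (1 - p + 1)) := by ring
        _ = _ := by rw [hsp]; field_simp; ring
    rw [e2]
    simp [hs.le]
    ring
  · have hsub : mu.real {x | t < max (g x - s) 0} ≤ mu.real {x | t + s < g x} :=
      measureReal_mono fun x (hx : t < max (g x - s) 0) => by
        rcases lt_max_iff.1 hx with h | h
        · show t + s < g x; linarith
        · exact absurd ht h.not_gt
    rw [pow_one]
    rcases le_or_gt t s with h | h
    · rw [Pi.add_apply, indicator_of_mem (show t ∈ Ioc 0 s from ⟨ht, h⟩), indicator_of_notMem (by simpa using h), add_zero]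
      have h1 : mu.real {x | t + s < g x} ≤ mu.real {x | s < g x} :=
        measureReal_mono fun x (hx : t + s < g x) => show s < g x by linarith
      have h2 := hd s le_rfl
      rw [hsp, mul_one] at h2
      exact mul_le_mul (hsub.trans (h1.trans h2)) h ht.le hM
    · rw [Pi.add_apply, indicator_of_mem (show t ∈ Ioi s from h),
        indicator_of_notMem (fun h' => h'.2.not_gt h), zero_add]
      have h1 : mu.real {x | t + s < g x} ≤ mu.real {x | t < g x} :=
        measureReal_mono fun x (hx : t + s < g x) => show t < g x by linarith
      have h2 := hsub.trans (h1.trans (hd t h.le))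
      calc _ ≤ M * (s ^ p * t ^ (-p)) * t := by gcongr
        _ = M * s ^ p * (t ^ (-p) * t ^ (1 : ℝ)) := by rw [Real.rpow_one]; ring
        _ = _ := by rw [← Real.rpow_add ht]; congr 2; ring

/-- The truncation of `g` at height `s` has its moments of order `m + 1 > q` controlled if the
distribution function of `g` grows at most like `t^(-q)` as `t` decreases from `s`. -/
lemma lower_moment {g : Circ → ℝ} (hc : Continuous g) (hg : ∀ x, 0 ≤ g x) {M s q : ℝ}
    (hM : 0 ≤ M) (hs : 0 < s) {m : ℕ} (hq : q < m + 1)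
    (hd : ∀ t > 0, t ≤ s → mu.real {x | t < g x} ≤ M * (s ^ q * t ^ (-q))) :
    ∫ x, (min (g x) s) ^ (m + 1) ∂mu ≤ (m + 1) / (m + 1 - q) * M * s ^ (m + 1) := by
  have hr : -1 < (m : ℝ) - q := by linarith
  have hi0 : IntegrableOn (fun t : ℝ => M * s ^ q * t ^ (m - q)) (Ioc 0 s) :=
    ((intervalIntegrable_iff_integrableOn_Ioc_of_le hs.le).1
      (intervalIntegral.intervalIntegrable_rpow' hr)).const_mul _
  have hi : IntegrableOn ((Ioc 0 s).indicator fun t => M * s ^ q * t ^ (m - q)) (Ioi 0) :=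
    (hi0.integrable_indicator measurableSet_Ioc).integrableOn
  have h := moment_le_of_distribution_le (h := fun x => min (g x) s) (by fun_prop)
    (fun x => le_min (hg x) hs.le) m hi (fun t ht =>
      indicator_nonneg (fun t ht' => by have := ht'.1; positivity) _) (fun t ht => ?_)
  · refine h.trans (le_of_eq ?_)
    rw [setIntegral_indicator measurableSet_Ioc, inter_eq_right.2 (fun t ht => ht.1),
      integral_const_mul, ← intervalIntegral.integral_of_le hs.le, integral_rpow (Or.inl hr),
      Real.zero_rpow (by linarith), sub_zero]
    have e : s ^ q * s ^ (m - q + 1) = s ^ (m + 1) := by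
      rw [← Real.rpow_add hs, ← Real.rpow_natCast]; congr 1; push_cast; ring
    calc _ = (m + 1) * M * (s ^ q * s ^ (m - q + 1)) / (m - q + 1) := by ring
      _ = _ := by rw [e, show (m : ℝ) - q + 1 = m + 1 - q by ring]; ring
  · rcases le_or_gt t s with h | h
    · rw [indicator_of_mem (show t ∈ Ioc 0 s from ⟨ht, h⟩)]
      have h1 : mu.real {x | t < min (g x) s} ≤ mu.real {x | t < g x} :=
        measureReal_mono fun x (hx : t < min (g x) s) => (lt_min_iff.1 hx).1
      have h2 := h1.trans (hd t ht h)
      calc _ ≤ M * (s ^ q * t ^ (-q)) * t ^ m := by gcongr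
        _ = M * s ^ q * (t ^ (-q) * t ^ (m : ℝ)) := by rw [Real.rpow_natCast]; ring
        _ = _ := by rw [← Real.rpow_add ht]; congr 2; ring
    · rw [indicator_of_notMem (fun h' => h'.2.not_gt h)]
      have : {x | t < min (g x) s} = ∅ := eq_empty_of_forall_notMem fun x hx =>
        (h.trans (lt_min_iff.1 hx).2).false
      rw [this]; simp

/-- Scalar truncation of a complex number at modulus `s`, in the form `z s / max(s, |z|)`. -/
noncomputable def trunc (s : ℝ) (z : ℂ) : ℂ := ((s / max s ‖z‖ : ℝ) : ℂ) * z

lemma norm_trunc {s : ℝ} (hs : 0 < s) (z : ℂ) : ‖trunc s z‖ = min ‖z‖ s := by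
  have : 0 < max s ‖z‖ := lt_max_of_lt_left hs
  rw [trunc, norm_mul, Complex.norm_real, Real.norm_of_nonneg (by positivity)]
  rcases le_total s ‖z‖ with h | h
  · have hz := hs.trans_le h
    rw [max_eq_right h, min_eq_right h]; field_simp
  · rw [max_eq_left h, min_eq_left h]; field_simp

lemma norm_sub_trunc {s : ℝ} (hs : 0 < s) (z : ℂ) : ‖z - trunc s z‖ = max (‖z‖ - s) 0 := by
  have h0 : 0 < max s ‖z‖ := lt_max_of_lt_left hs
  have e : z - trunc s z = ((1 - s / max s ‖z‖ : ℝ) : ℂ) * z := by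
    rw [trunc]; push_cast; ring
  have h1 : s / max s ‖z‖ ≤ 1 := (div_le_one h0).2 (le_max_left _ _)
  rw [e, norm_mul, Complex.norm_real, Real.norm_of_nonneg (by linarith)]
  rcases le_total s ‖z‖ with h | h
  · have hz := hs.trans_le h
    rw [max_eq_right h, max_eq_left (by linarith)]; field_simp
  · rw [max_eq_left h, max_eq_right (by linarith), div_self hs.ne']; simp

lemma continuous_trunc {s : ℝ} (hs : 0 < s) : Continuous (trunc s) := by
  unfold trunc
  refine Continuous.mul (Complex.continuous_ofReal.comp ?_) continuous_id
  exact continuous_const.div (by fun_prop) fun z => (lt_max_of_lt_left hs).ne'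

lemma sharpBlock_add (n : ℕ) (f g : Tor) :
    sharpBlock n (f + g) = sharpBlock n f + sharpBlock n g := by
  simp only [sharpBlock, map_add, add_smul, Finset.sum_add_distrib]

/-- Interpolation at a fixed height `s`: the square function of the part of `f` above height `s`
is measured in `L²`, the one of the truncated part in a high power. -/
lemma weak_at_height {p q : ℝ} (hp : 2 < p) :
    ∃ C > 0, ∀ (N : ℕ) (f : Tor) (M s : ℝ), 0 ≤ M → 0 < s →
      (∀ t ≥ s, mu.real {x | t < ‖f x‖} ≤ M * (s ^ p * t ^ (-p))) →
      (∀ t > 0, t ≤ s → mu.real {x | t < ‖f x‖} ≤ M * (s ^ q * t ^ (-q))) →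
      mu.real {x | s < √(∑ n ∈ Finset.range N, ‖sharpBlock n f x‖ ^ 2)} ≤ C * M := by
  obtain ⟨a, ha⟩ : ∃ a : ℕ, q < 2 ^ a := pow_unbounded_of_one_lt q one_lt_two
  obtain ⟨C₁, hC₁, h₁⟩ := sharp_square a
  set m : ℕ := 2 ^ (a + 1) with hm
  have hm1 : 2 * m = (2 * m - 1) + 1 := by have : 0 < m := by positivity
                                           omega
  have hqm : q < ((2 * m - 1 : ℕ) : ℝ) + 1 := by
    have : (((2 * m - 1 : ℕ) : ℝ) + 1) = 2 * m := by exact_mod_cast hm1.symm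
    rw [this, hm]; push_cast
    have : (0 : ℝ) < 2 ^ a := by positivity
    rw [pow_succ]; linarith
  set R : ℝ := (((2 * m - 1 : ℕ) : ℝ) + 1) / (((2 * m - 1 : ℕ) : ℝ) + 1 - q) with hR
  have hR0 : 0 ≤ R := div_nonneg (by positivity) (by linarith)
  have hp2 : 0 < p - 2 := by linarith
  refine ⟨16 * (1 + 1 / (p - 2)) + 4 ^ m * (C₁ * R), by positivity, ?_⟩
  intro N f M s hM hs hhi hlo
  set u : Tor := ⟨fun x => trunc s (f x), (continuous_trunc hs).comp f.continuous⟩ with hu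
  set v : Tor := f - u with hv
  have hfuv : f = u + v := by rw [hv]; abel
  have hun : ∀ x, ‖u x‖ = min ‖f x‖ s := fun x => norm_trunc hs _
  have hvn : ∀ x, ‖v x‖ = max (‖f x‖ - s) 0 := fun x => norm_sub_trunc hs _
  set U : Circ → ℝ := fun x => ∑ n ∈ Finset.range N, ‖sharpBlock n u x‖ ^ 2 with hU
  set V : Circ → ℝ := fun x => ∑ n ∈ Finset.range N, ‖sharpBlock n v x‖ ^ 2 with hV
  have hU0 : ∀ x, 0 ≤ U x := fun x => Finset.sum_nonneg fun _ _ => by positivity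
  have hV0 : ∀ x, 0 ≤ V x := fun x => Finset.sum_nonneg fun _ _ => by positivity
  have hUc : Continuous U := by fun_prop
  have hVc : Continuous V := by fun_prop
  have hle : ∀ x, ∑ n ∈ Finset.range N, ‖sharpBlock n f x‖ ^ 2 ≤ 2 * (U x + V x) := by
    intro x
    rw [hU, hV, ← Finset.sum_add_distrib, Finset.mul_sum]
    refine Finset.sum_le_sum fun n _ => ?_
    rw [hfuv, sharpBlock_add, ContinuousMap.add_apply]
    calc _ ≤ (‖sharpBlock n u x‖ + ‖sharpBlock n v x‖) ^ 2 := by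
          gcongr; exact norm_add_le _ _
      _ ≤ _ := add_sq_le
  have hV2 : ∫ x, V x ∂mu ≤ 4 * (1 + 1 / (p - 2)) * M * s ^ 2 := by
    have h := upper_moment (g := fun x => ‖f x‖) (by fun_prop) hM hs hp hhi
    have h2 := sharp_square_two N v
    simp only [hvn] at h2
    calc _ ≤ _ := h2
      _ ≤ 2 * (2 * (1 + 1 / (p - 2)) * M * s ^ 2) := by gcongr
      _ = _ := by ring
  have hUm : ∫ x, U x ^ m ∂mu ≤ C₁ * (R * M * s ^ (2 * m)) := by
    have h := lower_moment (g := fun x => ‖f x‖) (by fun_prop) (fun x => norm_nonneg _) hM hs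
      hqm hlo
    rw [← hm1] at h
    have h2 := h₁ N u
    simp only [hun, ← pow_mul] at h2
    exact h2.trans (by gcongr)
  have c1 := mul_meas_ge_le_integral_of_nonneg (ae_of_all mu hV0) (cint hVc) (s ^ 2 / 4)
  have c2 := mul_meas_ge_le_integral_of_nonneg (ae_of_all mu fun x => pow_nonneg (hU0 x) m)
    (cint (hUc.pow m)) ((s ^ 2 / 4) ^ m)
  have d1 : mu.real {x | s ^ 2 / 4 ≤ V x} ≤ 16 * (1 + 1 / (p - 2)) * M := by
    refine le_of_mul_le_mul_left ((c1.trans hV2).trans (le_of_eq ?_))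
      (show 0 < s ^ 2 / 4 by positivity)
    ring
  have d2 : mu.real {x | (s ^ 2 / 4) ^ m ≤ U x ^ m} ≤ 4 ^ m * (C₁ * R) * M := by
    refine le_of_mul_le_mul_left ((c2.trans hUm).trans (le_of_eq ?_))
      (show 0 < (s ^ 2 / 4) ^ m by positivity)
    rw [div_pow, ← pow_mul]; field_simp
  calc _ ≤ mu.real ({x | s ^ 2 / 4 ≤ V x} ∪ {x | (s ^ 2 / 4) ^ m ≤ U x ^ m}) := by
        refine measureReal_mono fun x hx => ?_
        have hx' := (Real.lt_sqrt hs.le).1 hx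
        have := hle x
        by_cases hVx : s ^ 2 / 4 ≤ V x
        · exact Or.inl hVx
        · exact Or.inr (pow_le_pow_left₀ (a := s ^ 2 / 4) (by positivity) (by linarith) m)
    _ ≤ _ := measureReal_union_le _ _
    _ ≤ 16 * (1 + 1 / (p - 2)) * M + 4 ^ m * (C₁ * R) * M := add_le_add d1 d2
    _ = _ := by ring

lemma volume_circ : (volume : Measure Circ) = mu := by
  rw [AddCircle.volume_eq_smul_haarAddCircle]; simp

/-- The analytic trigonometric polynomial with coefficients `c 0, …, c K`. -/
noncomputable def poly (K : ℕ) (c : ℕ → ℂ) : Tor :=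
  ∑ k ∈ Finset.range (K + 1), c k • (fourier (k : ℤ) : Tor)

lemma poly_apply (K : ℕ) (c : ℕ → ℂ) (x : Circ) :
    poly K c x = ∑ k ∈ Finset.range (K + 1), c k * fourier (k : ℤ) x := by
  simp [poly]

lemma sharpBlock_poly (K : ℕ) (c : ℕ → ℂ) (n : ℕ) (x : Circ) :
    sharpBlock n (poly K c) x = lacunaryBlock K c n x := by
  have e : ∀ k : ℕ, sharpBlock n (c k • (fourier (k : ℤ) : Tor)) =
      if 3 ^ n < 2 * k ∧ k ≤ 3 ^ n then c k • (fourier (k : ℤ) : Tor) else 0 := by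
    intro k
    simp only [sharpBlock, map_smul, cf_fourier, smul_eq_mul, mul_ite, mul_one, mul_zero,
      ite_smul, zero_smul]
    rw [Finset.sum_ite_eq]
    refine if_congr ?_ rfl rfl
    simp only [Finset.mem_filter, Finset.mem_Icc]
    have h3 : ((3 ^ n : ℕ) : ℤ) = 3 ^ n := by push_cast; rfl
    rw [← h3]
    omega
  have es : ∀ s : Finset ℕ, sharpBlock n (∑ k ∈ s, c k • (fourier (k : ℤ) : Tor)) =
      ∑ k ∈ s, sharpBlock n (c k • (fourier (k : ℤ) : Tor)) := by
    intro s
    induction s using Finset.induction_on with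
    | empty => simp [sharpBlock]
    | insert k s hk ih => rw [Finset.sum_insert hk, sharpBlock_add, ih, Finset.sum_insert hk]
  rw [poly, es, lacunaryBlock, Finset.sum_filter, ContinuousMap.sum_apply]
  refine Finset.sum_congr rfl fun k _ => ?_
  rw [e]
  split_ifs <;> simp

lemma tsum_lacunaryBlock (K : ℕ) (c : ℕ → ℂ) (x : Circ) :
    ∑' n, ‖lacunaryBlock K c n x‖ ^ 2 =
      ∑ n ∈ Finset.range (2 * K), ‖sharpBlock n (poly K c) x‖ ^ 2 := by
  simp only [sharpBlock_poly]
  refine tsum_eq_sum fun n hn => ?_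
  have h1 : n < 3 ^ n := Nat.lt_pow_self (by norm_num)
  rw [lacunaryBlock, Finset.filter_false_of_mem]
  · simp
  · intro k hk
    simp only [Finset.mem_range] at hk hn
    omega

/-- Interpolation combined with the power-type growth of `Φ`: at each height `s` the weak
moment of the square function is controlled by any bound `b` for the weak moment of `f`. -/
lemma weak_moment_le (Φ : ℝ → ℝ) (hpos : ∀ t > 0, 0 < Φ t) {p q C : ℝ}
    (hmono : MonotoneOn (fun t : ℝ => t ^ (-p) * Φ t) (Ioi 0))
    (hanti : AntitoneOn (fun t : ℝ => t ^ (-q) * Φ t) (Ioi 0)) {N : ℕ} {f : Tor}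
    (hC : ∀ M s : ℝ, 0 ≤ M → 0 < s →
      (∀ t ≥ s, mu.real {x | t < ‖f x‖} ≤ M * (s ^ p * t ^ (-p))) →
      (∀ t > 0, t ≤ s → mu.real {x | t < ‖f x‖} ≤ M * (s ^ q * t ^ (-q))) →
      mu.real {x | s < √(∑ n ∈ Finset.range N, ‖sharpBlock n f x‖ ^ 2)} ≤ C * M)
    {b : ℝ} (hb0 : 0 ≤ b) (hb : ∀ t > 0, mu.real {x | t < ‖f x‖} * Φ t ≤ b) {s : ℝ} (hs : 0 < s) :
    mu.real {x | s < √(∑ n ∈ Finset.range N, ‖sharpBlock n f x‖ ^ 2)} * Φ s ≤ C * b := by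
  have hΦs := hpos s hs
  -- if `s ^ (-e) Φ(s) ≤ t ^ (-e) Φ(t)` then `b / Φ(t)` is at most `(b / Φ(s)) (s / t) ^ e`
  have key : ∀ e t : ℝ, 0 < t → s ^ (-e) * Φ s ≤ t ^ (-e) * Φ t →
      mu.real {x | t < ‖f x‖} ≤ b / Φ s * (s ^ e * t ^ (-e)) := by
    intro e t ht h
    have hΦt := hpos t ht
    have hse : s ^ e * s ^ (-e) = 1 := by rw [← Real.rpow_add hs]; simp
    have h' : Φ s ≤ s ^ e * t ^ (-e) * Φ t := by
      calc Φ s = s ^ e * (s ^ (-e) * Φ s) := by rw [← mul_assoc, hse, one_mul]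
        _ ≤ s ^ e * (t ^ (-e) * Φ t) := by gcongr
        _ = _ := by ring
    calc mu.real {x | t < ‖f x‖} ≤ b / Φ t := (le_div_iff₀ hΦt).2 (hb t ht)
      _ ≤ b / Φ s * (s ^ e * t ^ (-e)) := by
        rw [div_mul_eq_mul_div, div_le_div_iff₀ hΦt hΦs]
        calc b * Φ s ≤ b * (s ^ e * t ^ (-e) * Φ t) := by gcongr
          _ = _ := by ring
  have h := hC (b / Φ s) s (by positivity) hs
    (fun t ht => key p t (hs.trans_le ht) (hmono hs (hs.trans_le ht) ht))
    (fun t ht hts => key q t ht (hanti ht hs hts))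
  calc _ ≤ C * (b / Φ s) * Φ s := by gcongr
    _ = _ := by field_simp

end LittlewoodPaley

theorem lacunary_littlewood_paley_weak_orlicz
    (Φ : ℝ → ℝ) (hΦ : IsOrliczFunction Φ) (p q : ℝ) (hp : 2 < p) (hpq : p ≤ q)
    (hmono : MonotoneOn (fun t : ℝ => t ^ (-p) * Φ t) (Ioi 0))
    (hanti : AntitoneOn (fun t : ℝ => t ^ (-q) * Φ t) (Ioi 0)) :
    ∃ C > 0, ∀ (K : ℕ) (c : ℕ → ℂ),
      (⨆ s ∈ Ioi (0 : ℝ),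
          volume {x : AddCircle (1 : ℝ) |
              s < Real.sqrt (∑' n : ℕ, ‖lacunaryBlock K c n x‖ ^ 2)} *
            ENNReal.ofReal (Φ s)) ≤
        ENNReal.ofReal C *
          ⨆ s ∈ Ioi (0 : ℝ),
            volume {x : AddCircle (1 : ℝ) |
                s < ‖∑ k ∈ Finset.range (K + 1), c k * fourier (k : ℤ) x‖} *
              ENNReal.ofReal (Φ s) := by
  obtain ⟨-, -, -, -, hpos, -⟩ := hΦ
  obtain ⟨C, hC0, hC⟩ := weak_at_height (q := q) hp
  refine ⟨C, hC0, fun K c => ?_⟩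
  simp only [tsum_lacunaryBlock, ← poly_apply]
  rw [volume_circ]
  set f := poly K c
  set B : ℝ≥0∞ := ⨆ s ∈ Ioi (0 : ℝ), mu {x | s < ‖f x‖} * ENNReal.ofReal (Φ s) with hB
  rcases eq_or_ne B ∞ with hBt | hBt
  · rw [hBt, ENNReal.mul_top (by simpa using hC0)]; exact le_top
  refine iSup₂_le fun s hs => ?_
  have hb : ∀ t > 0, mu.real {x | t < ‖f x‖} * Φ t ≤ B.toReal := by
    intro t ht
    have h : mu {x | t < ‖f x‖} * ENNReal.ofReal (Φ t) ≤ B :=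
      le_iSup₂_of_le (f := fun s (_ : s ∈ Ioi (0 : ℝ)) =>
        mu {x | s < ‖f x‖} * ENNReal.ofReal (Φ s)) t ht le_rfl
    have h' := ENNReal.toReal_mono hBt h
    rwa [ENNReal.toReal_mul, ENNReal.toReal_ofReal (hpos t ht).le] at h'
  have h := weak_moment_le Φ hpos hmono hanti (fun M s => hC (2 * K) f M s)
    ENNReal.toReal_nonneg hb hs
  rw [← ofReal_measureReal, ← ENNReal.ofReal_mul measureReal_nonneg, ← ENNReal.ofReal_toReal hBt,
    ← ENNReal.ofReal_mul hC0.le]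
  exact ENNReal.ofReal_le_ofReal h
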